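/- Let 1 < p < ∞ with N > p, and let u be a nonnegative C^1 weak solution of Δ_p u = 0 on all of ℝ^N. Then u is constant. -/

import Mathlib

open MeasureTheory
open scoped RealInnerProductSpace

/-!
A positive `p`-harmonic function on the whole space satisfies a Harnack inequality
`κ * u z ≤ u y` whose constant does not depend on the distance between the two points; applied to
`u - inf u + δ` with `δ → 0` it forces `u` to be constant.

For the Harnack inequality, Moser iteration bounds a positive `p`-subharmonic function at a point
by its `L^p` mean. The function `w = log (u + 1) - log u = log (1 + 1 / u)` is `p`-subharmonic, is
comparable to the negative part of `log u`, and has an energy bounded by the Caccioppoli inequality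
for `log u`. If `1 ≤ u` on a set of positive measure, `w ≤ 1` there, so that the Poincaré
inequality and Moser iteration bound `w` from above, i.e. `u` from below, on a larger ball. Once `u`
is bounded below on one ball it is so, with geometric losses, on all its dilates: the lower bound at
distance `R` from a ball of radius `r` is of order `(r / R) ^ γ`. To absorb this loss, the ball is
centred near a maximum of `u x * (R - dist x z) ^ γ`, where `u` is at most twice its value at the
centre while `u x` is at least `u z * (R / r) ^ γ` up to a constant.
-/

section Gradient

variable {E : Type*} [NormedAddCommGroup E] [InnerProductSpace ℝ E] [CompleteSpace E]
  {f g : E → ℝ} {x : E}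

lemma gradient_mul (hf : DifferentiableAt ℝ f x) (hg : DifferentiableAt ℝ g x) :
    gradient (fun y ↦ f y * g y) x = f x • gradient g x + g x • gradient f x := by
  apply HasGradientAt.gradient
  rw [hasGradientAt_iff_hasFDerivAt, map_add, map_smul, map_smul]
  exact hf.hasGradientAt.hasFDerivAt.mul hg.hasGradientAt.hasFDerivAt

lemma gradient_comp {h : ℝ → ℝ} {h' : ℝ} (hh : HasDerivAt h h' (f x))
    (hf : DifferentiableAt ℝ f x) : gradient (fun y ↦ h (f y)) x = h' • gradient f x := by
  apply HasGradientAt.gradient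
  rw [hasGradientAt_iff_hasFDerivAt, map_smul]
  exact hh.comp_hasFDerivAt x hf.hasGradientAt.hasFDerivAt

lemma gradient_comp_add_smul {x₀ : E} {r : ℝ} (hf : DifferentiableAt ℝ f (x₀ + r • x)) :
    gradient (fun y ↦ f (x₀ + r • y)) x = r • gradient f (x₀ + r • x) := by
  apply HasGradientAt.gradient
  have haffine : HasFDerivAt (fun y : E ↦ x₀ + r • y) (r • ContinuousLinearMap.id ℝ E) x :=
    ((hasFDerivAt_id x).const_smul r).const_add x₀
  refine (hf.hasGradientAt.hasFDerivAt.comp x haffine).congr_fderiv ?_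
  ext v
  simp

lemma norm_gradient (f : E → ℝ) (x : E) : ‖gradient f x‖ = ‖fderiv ℝ f x‖ := by
  rw [← toDual_gradient, LinearIsometryEquiv.norm_map]

lemma continuous_gradient (hf : ContDiff ℝ 1 f) : Continuous (gradient f) :=
  (InnerProductSpace.toDual ℝ E).symm.continuous.comp (hf.continuous_fderiv one_ne_zero)

lemma hasCompactSupport_gradient (hf : HasCompactSupport f) :
    HasCompactSupport (gradient f) :=
  (hf.fderiv (𝕜 := ℝ)).comp_left (g := (InnerProductSpace.toDual ℝ E).symm) (map_zero _)

end Gradient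

section Flux

variable {E : Type*} [NormedAddCommGroup E] [InnerProductSpace ℝ E] {p : ℝ}

/-- The flux `|v|^{p-2} v` of the `p`-Laplace operator, so that `Δ_p u = div (pFlux p (∇u))`.
At `v = 0` it vanishes for every `p`, whatever the value of `0 ^ (p - 2)`. -/
noncomputable def pFlux (p : ℝ) (v : E) : E := ‖v‖ ^ (p - 2) • v

lemma norm_pFlux (hp : 1 < p) (v : E) : ‖pFlux p v‖ = ‖v‖ ^ (p - 1) := by
  rcases eq_or_ne v 0 with rfl | hv
  · simp [pFlux, Real.zero_rpow (sub_ne_zero.2 hp.ne')]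
  · rw [pFlux, norm_smul, Real.norm_of_nonneg (by positivity), ← Real.rpow_add_one (by simpa)]
    ring_nf

lemma inner_pFlux_self (hp : 1 < p) (v : E) : ⟪pFlux p v, v⟫ = ‖v‖ ^ p := by
  rcases eq_or_ne v 0 with rfl | hv
  · simp [pFlux, Real.zero_rpow (by linarith : p ≠ 0)]
  · rw [pFlux, real_inner_smul_left, real_inner_self_eq_norm_sq, ← Real.rpow_add_natCast (by simpa)]
    norm_num

lemma continuous_pFlux (hp : 1 < p) : Continuous (pFlux p : E → E) := by
  refine continuous_iff_continuousAt.2 fun v ↦ ?_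
  rcases eq_or_ne v 0 with rfl | hv
  · have hzero : pFlux p (0 : E) = 0 := smul_zero _
    rw [ContinuousAt, hzero, tendsto_zero_iff_norm_tendsto_zero]
    simp_rw [norm_pFlux hp]
    have hcont : Continuous fun v : E ↦ ‖v‖ ^ (p - 1) :=
      continuous_norm.rpow_const fun _ ↦ Or.inr (by linarith)
    simpa [Real.zero_rpow (sub_ne_zero.2 hp.ne')] using hcont.tendsto 0
  · exact (continuousAt_id.norm.rpow_const (Or.inl (by simpa))).smul continuousAt_id

lemma continuous_pFlux_gradient [CompleteSpace E] (hp : 1 < p) {u : E → ℝ}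
    (hu : ContDiff ℝ 1 u) : Continuous fun x ↦ pFlux p (gradient u x) :=
  (continuous_pFlux hp).comp (continuous_gradient hu)

lemma pFlux_smul (p t : ℝ) (v : E) : pFlux p (t • v) = (|t| ^ (p - 2) * t) • pFlux p v := by
  simp only [pFlux, norm_smul, Real.norm_eq_abs, smul_smul,
    Real.mul_rpow (abs_nonneg t) (norm_nonneg v)]
  ring_nf

lemma inner_pFlux_gradient_comp [CompleteSpace E] (hp : 1 < p) {u ψ : E → ℝ} {x : E}
    (hu : DifferentiableAt ℝ u x) (hψ : DifferentiableAt ℝ ψ x) {h G : ℝ → ℝ} {g G' : ℝ}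
    (hh : HasDerivAt h (-g) (u x)) (hG : HasDerivAt G G' (u x)) (hg : 0 < g)
    (hGg : G (u x) = g ^ (p - 1)) :
    ⟪pFlux p (gradient (fun y ↦ h (u y)) x), gradient ψ x⟫ =
      -⟪pFlux p (gradient u x), gradient (fun y ↦ ψ y * G (u y)) x⟫ +
        ψ x * (G' * ‖gradient u x‖ ^ p) := by
  have hflux : pFlux p (gradient (fun y ↦ h (u y)) x) = -(G (u x) • pFlux p (gradient u x)) := by
    rw [gradient_comp hh hu, pFlux_smul, abs_neg, abs_of_pos hg, mul_neg,
      ← Real.rpow_add_one hg.ne', neg_smul, (by ring : p - 2 + 1 = p - 1), hGg]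
  rw [hflux, gradient_mul hψ (hG.differentiableAt.fun_comp' x hu), gradient_comp hG hu,
    inner_neg_left, inner_add_right, real_inner_smul_left, real_inner_smul_right,
    real_inner_smul_right, real_inner_smul_right, inner_pFlux_self hp]
  ring

end Flux

section Approximation

open Metric ContinuousLinearMap
open scoped ContDiff

lemma exists_contDiff_norm_fderiv_sub_le {E F : Type*} [NormedAddCommGroup E] [NormedSpace ℝ E]
    [FiniteDimensional ℝ E] [NormedAddCommGroup F] [NormedSpace ℝ F] [CompleteSpace F]
    {ψ : E → F} (hψ : ContDiff ℝ 1 ψ) (hψc : HasCompactSupport ψ) {ε : ℝ} (hε : 0 < ε) :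
    ∃ f : E → F, ContDiff ℝ ∞ f ∧ tsupport f ⊆ cthickening 1 (tsupport ψ) ∧
      ∀ x, ‖fderiv ℝ f x - fderiv ℝ ψ x‖ ≤ ε := by
  borelize E
  let μ : Measure E := Measure.addHaar
  have hψ' := hψ.continuous_fderiv one_ne_zero
  obtain ⟨δ, hδ, hδψ⟩ := Metric.uniformContinuous_iff.1
    ((hψc.fderiv (𝕜 := ℝ)).uniformContinuous_of_continuous hψ') ε hε
  let b : ContDiffBump (0 : E) := ⟨min δ 1 / 2, min δ 1, by positivity, by
    linarith [lt_min hδ one_pos]⟩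
  have hderiv (x : E) : fderiv ℝ (convolution (b.normed μ) ψ (lsmul ℝ ℝ) μ) x =
      convolution (b.normed μ) (fderiv ℝ ψ) (lsmul ℝ ℝ) μ x :=
    (hψc.hasFDerivAt_convolution_right (lsmul ℝ ℝ)
      b.continuous_normed.locallyIntegrable hψ x).fderiv
  refine ⟨convolution (b.normed μ) ψ (lsmul ℝ ℝ) μ,
    b.hasCompactSupport_normed.contDiff_convolution_left _ b.contDiff_normed
      hψ.continuous.locallyIntegrable, closure_minimal ?_ isClosed_cthickening, fun x ↦ ?_⟩
  · intro x hx
    obtain ⟨y, hy, z, hz, rfl⟩ := support_convolution_subset _ hx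
    rw [b.support_normed_eq, mem_ball_zero_iff] at hy
    refine mem_cthickening_of_dist_le _ z _ _ (subset_tsupport ψ hz) ?_
    rw [dist_add_self_left]
    exact hy.le.trans (min_le_right δ 1)
  · rw [hderiv, ← dist_eq_norm]
    exact b.dist_normed_convolution_le hψ'.aestronglyMeasurable fun y hy ↦
      (hδψ ((mem_ball.1 hy).trans_le (min_le_left δ 1))).le

end Approximation

section WeakSolutions

open Metric Set
open scoped ContDiff

variable {E : Type*} [NormedAddCommGroup E] [InnerProductSpace ℝ E] [FiniteDimensional ℝ E]
  [MeasurableSpace E] [BorelSpace E]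

lemma integrable_inner_gradient {A : E → E} (hA : Continuous A) {ψ : E → ℝ}
    (hψ : ContDiff ℝ 1 ψ) (hψc : HasCompactSupport ψ) :
    Integrable fun x ↦ ⟪A x, gradient ψ x⟫ := by
  refine (hA.inner (continuous_gradient hψ)).integrable_of_hasCompactSupport
    ((hasCompactSupport_gradient hψc).mono fun x ↦ ?_)
  exact mt fun hx ↦ by simp only [hx, inner_zero_right]

lemma integral_inner_gradient_eq_zero {A : E → E} (hA : Continuous A)
    (h : ∀ φ : E → ℝ, ContDiff ℝ ∞ φ → HasCompactSupport φ → ∫ x, ⟪A x, gradient φ x⟫ = 0)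
    {ψ : E → ℝ} (hψ : ContDiff ℝ 1 ψ) (hψc : HasCompactSupport ψ) :
    ∫ x, ⟪A x, gradient ψ x⟫ = 0 := by
  set K := cthickening 1 (tsupport ψ)
  have hK : IsCompact K := hψc.isCompact.cthickening
  suffices hsmall : ∀ ε > 0, |∫ x, ⟪A x, gradient ψ x⟫| ≤ (∫ x in K, ‖A x‖) * ε by
    have hlim : Filter.Tendsto (fun ε ↦ (∫ x in K, ‖A x‖) * ε) (nhdsWithin 0 (Ioi 0))
        (nhds ((∫ x in K, ‖A x‖) * 0)) :=
      (tendsto_nhdsWithin_of_tendsto_nhds (by fun_prop : Continuous _).continuousAt)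
    rw [mul_zero] at hlim
    exact abs_nonpos_iff.1 (ge_of_tendsto hlim (eventually_mem_nhdsWithin.mono hsmall))
  intro ε hε
  obtain ⟨f, hf, hfK, hfψ⟩ := exists_contDiff_norm_fderiv_sub_le hψ hψc hε
  have hfc : HasCompactSupport f := hK.of_isClosed_subset (isClosed_tsupport f) hfK
  have hf1 : ContDiff ℝ 1 f := hf.of_le (by exact_mod_cast le_top)
  have hdiff (x : E) : ‖gradient ψ x - gradient f x‖ ≤ ε := by
    rw [gradient, gradient, ← map_sub, LinearIsometryEquiv.norm_map, norm_sub_rev]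
    exact hfψ x
  have hzero (x : E) (hx : x ∉ K) : ⟪A x, gradient ψ x - gradient f x⟫ = 0 := by
    have hψx : fderiv ℝ ψ x = 0 := fderiv_of_notMem_tsupport ℝ
      fun hmem ↦ hx (self_subset_cthickening _ hmem)
    have hfx : fderiv ℝ f x = 0 := fderiv_of_notMem_tsupport ℝ fun hmem ↦ hx (hfK hmem)
    simp [gradient, hψx, hfx]
  calc |∫ x, ⟪A x, gradient ψ x⟫|
      = |∫ x, ⟪A x, gradient ψ x - gradient f x⟫| := by
        simp only [inner_sub_right]
        rw [integral_sub (integrable_inner_gradient hA hψ hψc)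
          (integrable_inner_gradient hA hf1 hfc), h f hf hfc, sub_zero]
    _ = ‖∫ x in K, ⟪A x, gradient ψ x - gradient f x⟫‖ := by
        rw [setIntegral_eq_integral_of_forall_compl_eq_zero hzero, Real.norm_eq_abs]
    _ ≤ ∫ x in K, ‖A x‖ * ε := by
        refine norm_integral_le_of_norm_le
          ((hA.norm.mul continuous_const).continuousOn.integrableOn_compact hK)
          (Filter.Eventually.of_forall fun x ↦ (norm_inner_le_norm _ _).trans ?_)
        gcongr
        exact hdiff x
    _ = (∫ x in K, ‖A x‖) * ε := integral_mul_const _ _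

variable {p : ℝ} {u : E → ℝ}

/-- `C¹` weak solutions of `Δ_p u = 0` on the whole space, tested against smooth functions. -/
structure IsPHarmonic (p : ℝ) (u : E → ℝ) : Prop where
  contDiff : ContDiff ℝ 1 u
  integral_inner_eq_zero_of_smooth : ∀ φ : E → ℝ, ContDiff ℝ ∞ φ → HasCompactSupport φ →
    ∫ x, ⟪pFlux p (gradient u x), gradient φ x⟫ = 0

/-- `C¹` weak solutions of `0 ≤ Δ_p w` on the whole space. Nonnegative `C¹` test functions are
used, as these are the ones the energy estimates need. -/
structure IsPSubharmonic (p : ℝ) (w : E → ℝ) : Prop where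
  contDiff : ContDiff ℝ 1 w
  integral_inner_nonpos : ∀ ψ : E → ℝ, ContDiff ℝ 1 ψ → HasCompactSupport ψ → (∀ x, 0 ≤ ψ x) →
    ∫ x, ⟪pFlux p (gradient w x), gradient ψ x⟫ ≤ 0

namespace IsPHarmonic

lemma integral_inner_eq_zero (hp : 1 < p) (hu : IsPHarmonic p u) {ψ : E → ℝ}
    (hψ : ContDiff ℝ 1 ψ) (hψc : HasCompactSupport ψ) :
    ∫ x, ⟪pFlux p (gradient u x), gradient ψ x⟫ = 0 :=
  integral_inner_gradient_eq_zero (continuous_pFlux_gradient hp hu.contDiff)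
    hu.integral_inner_eq_zero_of_smooth hψ hψc

lemma isPSubharmonic (hp : 1 < p) (hu : IsPHarmonic p u) : IsPSubharmonic p u :=
  ⟨hu.contDiff, fun _ hψ hψc _ ↦ (hu.integral_inner_eq_zero hp hψ hψc).le⟩

lemma add_const (hu : IsPHarmonic p u) (k : ℝ) : IsPHarmonic p fun x ↦ u x + k := by
  have hgrad (x : E) : gradient (fun x ↦ u x + k) x = gradient u x := by
    simp [gradient, fderiv_add_const]
  refine ⟨hu.contDiff.add contDiff_const, fun φ hφ hφc ↦ ?_⟩
  simpa only [hgrad] using hu.integral_inner_eq_zero_of_smooth φ hφ hφc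

lemma const_mul (hu : IsPHarmonic p u) (k : ℝ) : IsPHarmonic p fun x ↦ k * u x := by
  have hgrad (x : E) : gradient (fun x ↦ k * u x) x = k • gradient u x :=
    gradient_comp (by simpa using (hasDerivAt_id (u x)).const_mul k)
      (hu.contDiff.differentiable one_ne_zero x)
  refine ⟨contDiff_const.mul hu.contDiff, fun φ hφ hφc ↦ ?_⟩
  simp only [hgrad, pFlux_smul, real_inner_smul_left, integral_const_mul,
    hu.integral_inner_eq_zero_of_smooth φ hφ hφc, mul_zero]

lemma comp_add_smul (hu : IsPHarmonic p u) (x₀ : E) {r : ℝ} (hr : r ≠ 0) :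
    IsPHarmonic p fun x ↦ u (x₀ + r • x) := by
  have hcd := hu.contDiff
  refine ⟨by fun_prop, fun φ hφ hφc ↦ ?_⟩
  let e : E ≃ₜ E := (Homeomorph.smulOfNeZero r hr).trans (Homeomorph.addLeft x₀)
  have he_symm : ⇑e.symm = fun y ↦ r⁻¹ • (-x₀ + y) := rfl
  have hφe : ContDiff ℝ ∞ (φ ∘ e.symm) := by rw [he_symm]; fun_prop
  have hgradu (x : E) : gradient (fun x ↦ u (x₀ + r • x)) x = r • gradient u (e x) :=
    gradient_comp_add_smul (hcd.differentiable one_ne_zero _)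
  have hgradφ (x : E) : gradient φ x = r • gradient (φ ∘ e.symm) (e x) := by
    have hφ_eq : φ = fun y ↦ (φ ∘ e.symm) (x₀ + r • y) := by
      ext y
      simp [he_symm, smul_smul, hr]
    conv_lhs => rw [hφ_eq]
    exact gradient_comp_add_smul (hφe.differentiable (by simp) _)
  have hchange := Measure.integral_comp_smul (volume : Measure E)
    (fun x ↦ ⟪pFlux p (gradient u (x₀ + x)), gradient (φ ∘ e.symm) (x₀ + x)⟫) r
  rw [integral_add_left_eq_self fun x ↦ ⟪pFlux p (gradient u x), gradient (φ ∘ e.symm) x⟫,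
    hu.integral_inner_eq_zero_of_smooth _ hφe (hφc.comp_homeomorph e.symm), smul_zero] at hchange
  simp only [hgradu, hgradφ, pFlux_smul, real_inner_smul_left, real_inner_smul_right,
    integral_const_mul]
  change _ * (_ * ∫ x, ⟪pFlux p (gradient u (x₀ + r • x)),
    gradient (φ ∘ e.symm) (x₀ + r • x)⟫) = 0
  rw [hchange, mul_zero, mul_zero]

lemma isPSubharmonic_comp (hp : 1 < p) (hu : IsPHarmonic p u) {s : Set ℝ} (hs : IsOpen s)
    (hus : ∀ x, u x ∈ s) {h g : ℝ → ℝ} (hh : ∀ t ∈ s, HasDerivAt h (-g t) t)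
    (hg : ContDiffOn ℝ 1 g s) (hgpos : ∀ t ∈ s, 0 < g t) (hganti : AntitoneOn g s) :
    IsPSubharmonic p fun x ↦ h (u x) := by
  have hcd := hu.contDiff
  have hdu := hcd.differentiable one_ne_zero
  have hhu : ContDiff ℝ 1 fun x ↦ h (u x) := by
    have hcont : ContinuousOn (derivWithin h s) s := hg.continuousOn.neg.congr fun t ht ↦
      (hh t ht).hasDerivWithinAt.derivWithin (hs.uniqueDiffOn t ht)
    exact ((contDiffOn_one_iff_derivWithin hs.uniqueDiffOn).2
      ⟨fun t ht ↦ (hh t ht).differentiableAt.differentiableWithinAt, hcont⟩).comp_contDiff hcd hus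
  let G : ℝ → ℝ := fun t ↦ g t ^ (p - 1)
  have hG : ContDiffOn ℝ 1 G s := hg.rpow_const_of_ne fun t ht ↦ (hgpos t ht).ne'
  have hGderiv (t) (ht : t ∈ s) : HasDerivAt G (deriv G t) t :=
    ((hG.differentiableOn one_ne_zero).differentiableAt (hs.mem_nhds ht)).hasDerivAt
  have hGderiv_nonpos (t) (ht : t ∈ s) : deriv G t ≤ 0 := by
    have hGanti : AntitoneOn G s := fun a ha b hb hab ↦
      Real.rpow_le_rpow (hgpos b hb).le (hganti ha hb hab) (by linarith)
    rw [← derivWithin_of_isOpen hs ht]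
    exact hGanti.derivWithin_nonpos
  have hGu : ContDiff ℝ 1 fun x ↦ G (u x) := hG.comp_contDiff hcd hus
  refine ⟨hhu, fun ψ hψ hψc hψ0 ↦ ?_⟩
  have hψG : ContDiff ℝ 1 fun x ↦ ψ x * G (u x) := hψ.mul hGu
  have hpointwise (x : E) : ⟪pFlux p (gradient (fun x ↦ h (u x)) x), gradient ψ x⟫ ≤
      -⟪pFlux p (gradient u x), gradient (fun x ↦ ψ x * G (u x)) x⟫ := by
    rw [inner_pFlux_gradient_comp hp (hdu x) (hψ.differentiable one_ne_zero x) (hh _ (hus x))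
      (hGderiv _ (hus x)) (hgpos _ (hus x)) rfl]
    exact add_le_of_nonpos_right (mul_nonpos_of_nonneg_of_nonpos (hψ0 x)
      (mul_nonpos_of_nonpos_of_nonneg (hGderiv_nonpos _ (hus x)) (by positivity)))
  calc ∫ x, ⟪pFlux p (gradient (fun x ↦ h (u x)) x), gradient ψ x⟫
      ≤ ∫ x, -⟪pFlux p (gradient u x), gradient (fun x ↦ ψ x * G (u x)) x⟫ :=
        integral_mono (integrable_inner_gradient (continuous_pFlux_gradient hp hhu) hψ hψc)
          (integrable_inner_gradient (continuous_pFlux_gradient hp hcd) hψG hψc.mul_right).neg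
          hpointwise
    _ = 0 := by rw [integral_neg, hu.integral_inner_eq_zero hp hψG hψc.mul_right, neg_zero]

end IsPHarmonic

end WeakSolutions

lemma rpow_sub_one_mul_le {p a b : ℝ} (hp : 1 < p) (ha : 0 ≤ a) (hb : 0 ≤ b) :
    a ^ (p - 1) * b ≤ a ^ p + b ^ p := by
  have hsplit {t : ℝ} (ht : 0 ≤ t) : t ^ (p - 1) * t = t ^ p := by
    rw [← Real.rpow_add_one' ht (by linarith), sub_add_cancel]
  rcases le_total a b with hab | hba
  · calc a ^ (p - 1) * b ≤ b ^ (p - 1) * b := by gcongr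
      _ = b ^ p := hsplit hb
      _ ≤ a ^ p + b ^ p := le_add_of_nonneg_left (by positivity)
  · calc a ^ (p - 1) * b ≤ a ^ (p - 1) * a := by gcongr
      _ = a ^ p := hsplit ha
      _ ≤ a ^ p + b ^ p := le_add_of_nonneg_right (by positivity)

section Caccioppoli

variable {E : Type*} [NormedAddCommGroup E] [InnerProductSpace ℝ E] {p q : ℝ} {w φ : E → ℝ}

lemma contDiff_rpow_mul_rpow (hp : 1 ≤ p) (β : ℝ) (hw : ContDiff ℝ 1 w) (hwpos : ∀ x, 0 < w x)
    (hφ : ContDiff ℝ 1 φ) : ContDiff ℝ 1 fun x ↦ w x ^ β * φ x ^ p :=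
  (hw.rpow_const_of_ne fun x ↦ (hwpos x).ne').mul <| by
    exact_mod_cast hφ.rpow_const_of_le (m := 1) (by exact_mod_cast hp)

section Pointwise

variable [CompleteSpace E]

lemma gradient_rpow_mul_rpow (hp : 1 ≤ p) (β : ℝ) {x : E} (hw : DifferentiableAt ℝ w x)
    (hφ : DifferentiableAt ℝ φ x) (hwx : w x ≠ 0) :
    gradient (fun y ↦ w y ^ β * φ y ^ p) x =
      (β * w x ^ (β - 1) * φ x ^ p) • gradient w x +
        (p * w x ^ β * φ x ^ (p - 1)) • gradient φ x := by
  rw [gradient_mul (hw.rpow_const (Or.inl hwx)) (hφ.rpow_const (Or.inr hp)),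
    gradient_comp (h := (· ^ β)) (Real.hasDerivAt_rpow_const (Or.inl hwx)) hw,
    gradient_comp (h := (· ^ p)) (Real.hasDerivAt_rpow_const (Or.inr hp)) hφ,
    smul_smul, smul_smul, add_comm]
  congr 2 <;> ring

lemma caccioppoli_pointwise (hp : 1 < p) (hq : q - p + 1 ≠ 0) {x : E}
    (hw : DifferentiableAt ℝ w x) (hφ : DifferentiableAt ℝ φ x) (hwx : 0 < w x)
    (hφx : 0 ≤ φ x) :
    (q - p + 1) ^ 2 / 2 * (φ x ^ p * (w x ^ (q - p) * ‖gradient w x‖ ^ p) -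
        (2 * p / |q - p + 1|) ^ p * (w x ^ q * ‖gradient φ x‖ ^ p)) ≤
      (q - p + 1) * ⟪pFlux p (gradient w x),
        gradient (fun y ↦ w y ^ (q - p + 1) * φ y ^ p) x⟫ := by
  set β := q - p + 1 with hβ
  set K := 2 * p / |β| with hK
  set a := φ x * ‖gradient w x‖ with ha
  set b := w x * ‖gradient φ x‖ with hb
  have : 0 < |β| := abs_pos.2 hq
  have hcauchy : |⟪pFlux p (gradient w x), gradient φ x⟫| ≤
      ‖gradient w x‖ ^ (p - 1) * ‖gradient φ x‖ := by
    rw [← norm_pFlux hp]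
    exact abs_real_inner_le_norm _ _
  have hcross : -(β ^ 2 / 2 * (w x ^ (q - p) * (a ^ (p - 1) * (K * b)))) ≤
      β * (p * w x ^ β * φ x ^ (p - 1)) * ⟪pFlux p (gradient w x), gradient φ x⟫ := by
    refine neg_le_of_abs_le ?_
    have hcoeff : β ^ 2 / 2 * (w x ^ (q - p) * (a ^ (p - 1) * (K * b))) =
        |β| * (p * w x ^ β * φ x ^ (p - 1)) *
          (‖gradient w x‖ ^ (p - 1) * ‖gradient φ x‖) := by
      rw [ha, hb, hK, Real.mul_rpow hφx (norm_nonneg _), hβ, Real.rpow_add_one hwx.ne', ← hβ,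
        ← sq_abs]
      field_simp
    rw [hcoeff, abs_mul, abs_mul, abs_of_nonneg (by positivity : 0 ≤ p * w x ^ β * φ x ^ (p - 1))]
    gcongr
  have hyoung := rpow_sub_one_mul_le hp (by positivity : 0 ≤ a) (by positivity : 0 ≤ K * b)
  have hwq : w x ^ q = w x ^ (q - p) * w x ^ p := by rw [← Real.rpow_add hwx, sub_add_cancel]
  have hmain : β ^ 2 / 2 * (φ x ^ p * (w x ^ (q - p) * ‖gradient w x‖ ^ p) -
      K ^ p * (w x ^ q * ‖gradient φ x‖ ^ p)) =
      β ^ 2 / 2 * (w x ^ (q - p) * (a ^ p - (K * b) ^ p)) := by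
    rw [hwq, Real.mul_rpow (by positivity) (by positivity : 0 ≤ b), ha, hb,
      Real.mul_rpow hφx (norm_nonneg _), Real.mul_rpow hwx.le (norm_nonneg _)]
    ring
  rw [hmain, gradient_rpow_mul_rpow hp.le β hw hφ hwx.ne', inner_add_right,
    real_inner_smul_right, real_inner_smul_right, inner_pFlux_self hp]
  have hβ1 : β - 1 = q - p := by rw [hβ]; ring
  have hap : φ x ^ p * ‖gradient w x‖ ^ p = a ^ p := (Real.mul_rpow hφx (norm_nonneg _)).symm
  have : 0 ≤ β ^ 2 / 2 * w x ^ (q - p) := by positivity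
  rw [hβ1]
  linear_combination hcross + (β ^ 2 / 2 * w x ^ (q - p)) * hyoung - β ^ 2 * w x ^ (q - p) * hap

lemma norm_gradient_rpow_mul_rpow_le (hp : 1 < p) (hq : 0 ≤ q) {x : E}
    (hw : DifferentiableAt ℝ w x) (hφ : DifferentiableAt ℝ φ x) (hwx : 0 < w x)
    (hφx : φ x ∈ Set.Icc 0 1) {L : ℝ} (hL : 0 < L) (hφL : ‖gradient φ x‖ ≤ L) :
    ‖gradient (fun y ↦ w y ^ q * φ y ^ p) x‖ ≤
      (q + p) * L * w x ^ q + q * L / L ^ p * (φ x ^ p * (w x ^ (q - p) * ‖gradient w x‖ ^ p)) := by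
  obtain ⟨hφ0, hφ1⟩ := hφx
  have hp0 : 0 < p := one_pos.trans hp
  have hφp1 : φ x ^ p ≤ 1 := Real.rpow_le_one hφ0 hφ1 hp0.le
  have hφp1' : φ x ^ (p - 1) ≤ 1 := Real.rpow_le_one hφ0 hφ1 (by linarith)
  have hwsplit (t : ℝ) : w x ^ (q - p + t) = w x ^ (q - p) * w x ^ t := Real.rpow_add hwx _ _
  have hwq : w x ^ q = w x ^ (q - p) * w x ^ p := by rw [← hwsplit, sub_add_cancel]
  have hyoung : w x ^ (q - 1) * ‖gradient w x‖ ≤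
      L * w x ^ q + L / L ^ p * (w x ^ (q - p) * ‖gradient w x‖ ^ p) := by
    have h := rpow_sub_one_mul_le hp hwx.le (by positivity : 0 ≤ ‖gradient w x‖ / L)
    calc w x ^ (q - 1) * ‖gradient w x‖
        = L * w x ^ (q - p) * (w x ^ (p - 1) * (‖gradient w x‖ / L)) := by
          rw [(by ring : q - 1 = q - p + (p - 1)), hwsplit]
          field_simp
      _ ≤ L * w x ^ (q - p) * (w x ^ p + (‖gradient w x‖ / L) ^ p) := by gcongr
      _ = _ := by
          rw [Real.div_rpow (norm_nonneg _) hL.le, hwq]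
          ring
  calc ‖gradient (fun y ↦ w y ^ q * φ y ^ p) x‖
      ≤ q * φ x ^ p * (w x ^ (q - 1) * ‖gradient w x‖) +
          p * w x ^ q * (φ x ^ (p - 1) * ‖gradient φ x‖) := by
        rw [gradient_rpow_mul_rpow hp.le q hw hφ hwx.ne']
        refine (norm_add_le _ _).trans_eq ?_
        rw [norm_smul, norm_smul, Real.norm_of_nonneg (by positivity),
          Real.norm_of_nonneg (by positivity)]
        ring
    _ ≤ q * φ x ^ p * (L * w x ^ q + L / L ^ p * (w x ^ (q - p) * ‖gradient w x‖ ^ p)) +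
          p * w x ^ q * (1 * L) := by gcongr
    _ = q * L * w x ^ q * φ x ^ p + p * L * w x ^ q +
          q * L / L ^ p * (φ x ^ p * (w x ^ (q - p) * ‖gradient w x‖ ^ p)) := by ring
    _ ≤ q * L * w x ^ q * 1 + p * L * w x ^ q +
          q * L / L ^ p * (φ x ^ p * (w x ^ (q - p) * ‖gradient w x‖ ^ p)) := by gcongr
    _ = _ := by ring

end Pointwise

variable [FiniteDimensional ℝ E] [MeasurableSpace E] [BorelSpace E]

lemma integral_le_of_test_inequality (hp : 1 < p) (hq : q - p + 1 ≠ 0) (hw : ContDiff ℝ 1 w)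
    (hwpos : ∀ x, 0 < w x) (hφ : ContDiff ℝ 1 φ) (hφc : HasCompactSupport φ)
    (hφ0 : ∀ x, 0 ≤ φ x)
    (htest : (q - p + 1) * ∫ x, ⟪pFlux p (gradient w x),
      gradient (fun y ↦ w y ^ (q - p + 1) * φ y ^ p) x⟫ ≤ 0) :
    ∫ x, φ x ^ p * (w x ^ (q - p) * ‖gradient w x‖ ^ p) ≤
      (2 * p / |q - p + 1|) ^ p * ∫ x, w x ^ q * ‖gradient φ x‖ ^ p := by
  have hp0 : 0 < p := one_pos.trans hp
  have hwrpow (t : ℝ) : Continuous fun x ↦ w x ^ t :=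
    hw.continuous.rpow_const fun x ↦ Or.inl (hwpos x).ne'
  have hnorm {f : E → ℝ} (hf : ContDiff ℝ 1 f) : Continuous fun x ↦ ‖gradient f x‖ ^ p :=
    (continuous_gradient hf).norm.rpow_const fun _ ↦ Or.inr hp0.le
  have hφp : HasCompactSupport fun x ↦ φ x ^ p :=
    hφc.comp_left (g := (· ^ p)) (Real.zero_rpow hp0.ne')
  have hgradφ : HasCompactSupport fun x ↦ ‖gradient φ x‖ ^ p :=
    (hasCompactSupport_gradient hφc).comp_left (g := fun v ↦ ‖v‖ ^ p)
      (by rw [norm_zero, Real.zero_rpow hp0.ne'])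
  have hint_lhs : Integrable fun x ↦ φ x ^ p * (w x ^ (q - p) * ‖gradient w x‖ ^ p) :=
    ((hφ.continuous.rpow_const fun _ ↦ Or.inr hp0.le).mul
      ((hwrpow _).mul (hnorm hw))).integrable_of_hasCompactSupport hφp.mul_right
  have hint_rhs : Integrable fun x ↦ w x ^ q * ‖gradient φ x‖ ^ p :=
    ((hwrpow _).mul (hnorm hφ)).integrable_of_hasCompactSupport hgradφ.mul_left
  have hint_test := integrable_inner_gradient (continuous_pFlux_gradient hp hw)
    (contDiff_rpow_mul_rpow hp.le (q - p + 1) hw hwpos hφ) hφp.mul_left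
  have hmono := integral_mono ((hint_lhs.sub (hint_rhs.const_mul _)).const_mul _)
    (hint_test.const_mul (q - p + 1)) fun x ↦ caccioppoli_pointwise hp hq
      (hw.differentiable one_ne_zero x) (hφ.differentiable one_ne_zero x) (hwpos x) (hφ0 x)
  simp only [Pi.sub_apply] at hmono
  rw [integral_const_mul, integral_sub hint_lhs (hint_rhs.const_mul _), integral_const_mul,
    integral_const_mul] at hmono
  exact sub_nonpos.1 (nonpos_of_mul_nonpos_right (hmono.trans htest) (by positivity))

lemma IsPSubharmonic.caccioppoli (hp : 1 < p) (hw : IsPSubharmonic p w) (hwpos : ∀ x, 0 < w x)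
    (hφ : ContDiff ℝ 1 φ) (hφc : HasCompactSupport φ) (hφ0 : ∀ x, 0 ≤ φ x) (hpq : p ≤ q) :
    ∫ x, φ x ^ p * (w x ^ (q - p) * ‖gradient w x‖ ^ p) ≤
      (2 * p) ^ p * ∫ x, w x ^ q * ‖gradient φ x‖ ^ p := by
  have hβ : 1 ≤ q - p + 1 := by linarith
  have htest := hw.integral_inner_nonpos _ (contDiff_rpow_mul_rpow hp.le (q - p + 1) hw.contDiff
    hwpos hφ) (hφc.comp_left (g := (· ^ p)) (Real.zero_rpow (by linarith))).mul_left
    fun x ↦ mul_nonneg (Real.rpow_nonneg (hwpos x).le _) (Real.rpow_nonneg (hφ0 x) _)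
  refine (integral_le_of_test_inequality hp (by linarith) hw.contDiff hwpos hφ hφc hφ0
    (mul_nonpos_of_nonneg_of_nonpos (by linarith) htest)).trans ?_
  gcongr
  · exact integral_nonneg fun x ↦ mul_nonneg (Real.rpow_nonneg (hwpos x).le _) (by positivity)
  · rw [abs_of_pos (by linarith)]
    exact div_le_self (by linarith) hβ

lemma IsPHarmonic.caccioppoli (hp : 1 < p) (hw : IsPHarmonic p w) (hwpos : ∀ x, 0 < w x)
    (hφ : ContDiff ℝ 1 φ) (hφc : HasCompactSupport φ) (hφ0 : ∀ x, 0 ≤ φ x)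
    (hq : q - p + 1 ≠ 0) :
    ∫ x, φ x ^ p * (w x ^ (q - p) * ‖gradient w x‖ ^ p) ≤
      (2 * p / |q - p + 1|) ^ p * ∫ x, w x ^ q * ‖gradient φ x‖ ^ p := by
  refine integral_le_of_test_inequality hp hq hw.contDiff hwpos hφ hφc hφ0 (le_of_eq ?_)
  rw [hw.integral_inner_eq_zero hp (contDiff_rpow_mul_rpow hp.le _ hw.contDiff hwpos hφ)
    (hφc.comp_left (g := (· ^ p)) (Real.zero_rpow (by linarith))).mul_left, mul_zero]

end Caccioppoli

section Cutoff

open Metric Set Filter Topology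

lemma exists_lipschitzWith_smoothTransition : ∃ K, LipschitzWith K Real.smoothTransition := by
  obtain ⟨K, hK⟩ := ((Real.smoothTransition.contDiff (n := 1)).locallyLipschitz.locallyLipschitzOn
    (s := Icc 0 1)).exists_lipschitzOnWith_of_compact isCompact_Icc
  refine ⟨K, ?_⟩
  have hproj := hK.to_restrict.comp (LipschitzWith.projIcc (zero_le_one (α := ℝ)))
  have heq : (Icc 0 1).domRestrict Real.smoothTransition ∘ projIcc 0 1 zero_le_one =
      Real.smoothTransition := funext fun _ ↦ Real.smoothTransition.projIcc
  rwa [mul_one, heq] at hproj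

lemma exists_cutoff (E : Type*) [NormedAddCommGroup E] [InnerProductSpace ℝ E] :
    ∃ K : ℝ, 0 < K ∧ ∀ (c : E) (ρ' ρ : ℝ), 0 < ρ' → ρ' < ρ → ∃ φ : E → ℝ,
      ContDiff ℝ 1 φ ∧ tsupport φ ⊆ closedBall c ρ ∧ (∀ x, φ x ∈ Icc 0 1) ∧
        (∀ x ∈ closedBall c ρ', φ x = 1) ∧ ∀ x, ‖fderiv ℝ φ x‖ ≤ K / (ρ - ρ') := by
  obtain ⟨K, hK⟩ := exists_lipschitzWith_smoothTransition
  refine ⟨K + 1, by positivity, fun c ρ' ρ hρ' hρ ↦ ?_⟩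
  have hpos : 0 < ρ - ρ' := sub_pos.2 hρ
  let φ : E → ℝ := fun x ↦ Real.smoothTransition ((ρ - dist x c) / (ρ - ρ'))
  have hone (x : E) (hx : dist x c ≤ ρ') : φ x = 1 :=
    Real.smoothTransition.one_of_one_le ((one_le_div hpos).2 (by linarith))
  have hlip : LipschitzWith (K * ‖(ρ - ρ')⁻¹‖₊) φ := by
    refine hK.comp (LipschitzWith.of_dist_le_mul fun x y ↦ ?_)
    rw [dist_eq_norm, ← sub_div, sub_sub_sub_cancel_left, div_eq_inv_mul, norm_mul, coe_nnnorm]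
    gcongr
    exact (abs_sub_comm _ _).trans_le (abs_dist_sub_le x y c)
  refine ⟨φ, contDiff_iff_contDiffAt.2 fun x ↦ ?_,
    closure_minimal (fun x hx ↦ ?_) isClosed_closedBall,
    fun x ↦ ⟨Real.smoothTransition.nonneg _, Real.smoothTransition.le_one _⟩,
    fun x hx ↦ hone x hx, fun x ↦ ?_⟩
  · rcases eq_or_ne x c with rfl | hxc
    · have hnear : φ =ᶠ[𝓝 x] fun _ ↦ 1 := by
        filter_upwards [closedBall_mem_nhds x hρ'] using hone
      exact contDiffAt_const.congr_of_eventuallyEq hnear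
    · exact Real.smoothTransition.contDiffAt.comp x
        ((contDiffAt_const.sub (contDiffAt_id.dist ℝ contDiffAt_const hxc)).div_const _)
  · by_contra hxρ
    exact hx (Real.smoothTransition.zero_of_nonpos
      (div_nonpos_of_nonpos_of_nonneg (by linarith [not_le.1 (mt mem_closedBall.2 hxρ)]) hpos.le))
  · refine (norm_fderiv_le_of_lipschitz ℝ hlip).trans ?_
    rw [NNReal.coe_mul, coe_nnnorm, Real.norm_of_nonneg (by positivity), ← div_eq_mul_inv]
    gcongr
    linarith

end Cutoff

section Moser

open Metric Set Module

variable {E : Type*} [NormedAddCommGroup E] [InnerProductSpace ℝ E] [FiniteDimensional ℝ E]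
  [MeasurableSpace E] [BorelSpace E] {p q χ : ℝ} {w : E → ℝ}

lemma exists_integral_rpow_le_integral_norm_gradient
    (hχ : Real.HolderConjugate (finrank ℝ E) χ) :
    ∃ C : ℝ, 0 < C ∧ ∀ g : E → ℝ, ContDiff ℝ 1 g → HasCompactSupport g →
      ∫ x, |g x| ^ χ ≤ (C * ∫ x, ‖gradient g x‖) ^ χ := by
  set S := lintegralPowLePowLIntegralFDerivConst (volume : Measure E) χ
  have hχ0 : 0 < χ := hχ.symm.pos
  refine ⟨(S : ℝ) ^ χ⁻¹ + 1, by positivity, fun g hg hgc ↦ ?_⟩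
  have hgrad_cont := continuous_gradient hg
  have hgrad_int : Integrable fun x ↦ ‖gradient g x‖ :=
    (hgrad_cont.integrable_of_hasCompactSupport (hasCompactSupport_gradient hgc)).norm
  have hfderiv : ∫⁻ x, ‖fderiv ℝ g x‖ₑ = ENNReal.ofReal (∫ x, ‖gradient g x‖) := by
    rw [ofReal_integral_eq_lintegral_ofReal hgrad_int (.of_forall fun _ ↦ norm_nonneg _)]
    simp_rw [norm_gradient, ofReal_norm]
  have hsobolev := lintegral_pow_le_pow_lintegral_fderiv (volume : Measure E) hg hgc hχ
  have hnonneg : 0 ≤ ∫ x, ‖gradient g x‖ := integral_nonneg fun _ ↦ norm_nonneg _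
  rw [hfderiv, ENNReal.ofReal_rpow_of_nonneg hnonneg hχ0.le] at hsobolev
  calc ∫ x, |g x| ^ χ = (∫⁻ x, ‖g x‖ₑ ^ χ).toReal := by
        rw [integral_eq_lintegral_of_nonneg_ae (.of_forall fun _ ↦ by positivity)
          (hg.continuous.abs.rpow_const fun _ ↦ Or.inr hχ0.le).aestronglyMeasurable]
        simp_rw [← ENNReal.ofReal_rpow_of_nonneg (abs_nonneg _) hχ0.le, ← Real.norm_eq_abs,
          ofReal_norm]
    _ ≤ S * (∫ x, ‖gradient g x‖) ^ χ := by
        refine ENNReal.toReal_le_of_le_ofReal (by positivity) (hsobolev.trans_eq ?_)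
        rw [ENNReal.ofReal_mul S.coe_nonneg, ENNReal.ofReal_coe_nnreal]
    _ = ((S : ℝ) ^ χ⁻¹ * ∫ x, ‖gradient g x‖) ^ χ := by
        rw [Real.mul_rpow (by positivity) hnonneg, Real.rpow_inv_rpow S.coe_nonneg hχ0.ne']
    _ ≤ _ := by
        gcongr
        linarith

lemma integral_rpow_mul_norm_gradient_rpow_le (hp : 0 < p) (hw : Continuous w)
    (hwpos : ∀ x, 0 < w x) {φ : E → ℝ} {B : Set E} (hB : IsCompact B) (hφ : ContDiff ℝ 1 φ)
    (hφB : tsupport φ ⊆ B) {L : ℝ} (hφL : ∀ x, ‖gradient φ x‖ ≤ L) (q : ℝ) :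
    ∫ x, w x ^ q * ‖gradient φ x‖ ^ p ≤ L ^ p * ∫ x in B, w x ^ q := by
  have hwq : Continuous fun x ↦ w x ^ q := hw.rpow_const fun x ↦ Or.inl (hwpos x).ne'
  have hgradφ0 (x : E) (hx : x ∉ B) : gradient φ x = 0 := by
    rw [gradient, fderiv_of_notMem_tsupport ℝ fun h ↦ hx (hφB h), map_zero]
  rw [← setIntegral_eq_integral_of_forall_compl_eq_zero (s := B) fun x hx ↦ by
    rw [hgradφ0 x hx, norm_zero, Real.zero_rpow hp.ne', mul_zero], ← integral_const_mul]
  refine setIntegral_mono ((hwq.mul ((continuous_gradient hφ).norm.rpow_const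
    fun _ ↦ Or.inr hp.le)).continuousOn.integrableOn_compact hB)
    ((hwq.continuousOn.integrableOn_compact hB).const_mul _) fun x ↦ ?_
  rw [mul_comm]
  have := hwpos x
  gcongr
  exact hφL x

lemma IsPSubharmonic.setIntegral_rpow_mul_norm_gradient_rpow_le (hp : 1 < p)
    (hw : IsPSubharmonic p w) (hwpos : ∀ x, 0 < w x) (hpq : p ≤ q) {φ : E → ℝ} {B : Set E}
    (hB : IsCompact B) (hφ : ContDiff ℝ 1 φ) (hφB : tsupport φ ⊆ B) (hφ0 : ∀ x, 0 ≤ φ x)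
    {L : ℝ} (hφL : ∀ x, ‖gradient φ x‖ ≤ L) :
    ∫ x in B, φ x ^ p * (w x ^ (q - p) * ‖gradient w x‖ ^ p) ≤
      (2 * p) ^ p * (L ^ p * ∫ x in B, w x ^ q) := by
  have hp0 : 0 < p := one_pos.trans hp
  rw [setIntegral_eq_integral_of_forall_compl_eq_zero fun x hx ↦ by
    rw [image_eq_zero_of_notMem_tsupport fun h ↦ hx (hφB h), Real.zero_rpow hp0.ne', zero_mul]]
  refine (hw.caccioppoli hp hwpos hφ (hB.of_isClosed_subset (isClosed_tsupport φ) hφB)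
    hφ0 hpq).trans ?_
  gcongr
  exact integral_rpow_mul_norm_gradient_rpow_le hp0 hw.contDiff.continuous hwpos hB hφ hφB hφL q

lemma IsPSubharmonic.integral_norm_gradient_rpow_mul_rpow_le (hp : 1 < p)
    (hw : IsPSubharmonic p w) (hwpos : ∀ x, 0 < w x) (hpq : p ≤ q) {φ : E → ℝ} {B : Set E}
    (hB : IsCompact B) (hφ : ContDiff ℝ 1 φ) (hφB : tsupport φ ⊆ B) (hφ01 : ∀ x, φ x ∈ Icc 0 1)
    {L : ℝ} (hL : 0 < L) (hφL : ∀ x, ‖gradient φ x‖ ≤ L) :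
    ∫ x, ‖gradient (fun y ↦ w y ^ q * φ y ^ p) x‖ ≤
      (2 + (2 * p) ^ p) * q * L * ∫ x in B, w x ^ q := by
  have hp0 : 0 < p := one_pos.trans hp
  have hq0 : 0 < q := hp0.trans_le hpq
  have hw' := hw.contDiff
  set g : E → ℝ := fun y ↦ w y ^ q * φ y ^ p
  set e : E → ℝ := fun x ↦ φ x ^ p * (w x ^ (q - p) * ‖gradient w x‖ ^ p)
  have hgφ : tsupport g ⊆ tsupport φ :=
    closure_mono (Function.support_subset_iff'.2 fun y hy ↦ by
      simp only [g, Function.notMem_support.1 hy, Real.zero_rpow hp0.ne', mul_zero])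
  have hgB (x : E) (hx : x ∉ B) : gradient g x = 0 := by
    rw [gradient, fderiv_of_notMem_tsupport ℝ fun h ↦ hx (hφB (hgφ h)), map_zero]
  have hwq_cont (t : ℝ) : Continuous fun x ↦ w x ^ t :=
    hw'.continuous.rpow_const fun x ↦ Or.inl (hwpos x).ne'
  have hwq_int : IntegrableOn (fun x ↦ w x ^ q) B :=
    (hwq_cont q).continuousOn.integrableOn_compact hB
  have he_cont : Continuous e := (hφ.continuous.rpow_const fun _ ↦ Or.inr hp0.le).mul
    ((hwq_cont _).mul ((continuous_gradient hw').norm.rpow_const fun _ ↦ Or.inr hp0.le))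
  have he_int : IntegrableOn e B := he_cont.continuousOn.integrableOn_compact hB
  have hg_cont := continuous_gradient (contDiff_rpow_mul_rpow hp.le q hw' hwpos hφ)
  calc ∫ x, ‖gradient g x‖ = ∫ x in B, ‖gradient g x‖ :=
        (setIntegral_eq_integral_of_forall_compl_eq_zero fun x hx ↦ by
          rw [hgB x hx, norm_zero]).symm
    _ ≤ ∫ x in B, ((q + p) * L * w x ^ q + q * L / L ^ p * e x) :=
        setIntegral_mono (hg_cont.norm.continuousOn.integrableOn_compact hB)
          ((hwq_int.const_mul _).add (he_int.const_mul _)) fun x ↦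
          norm_gradient_rpow_mul_rpow_le hp hq0.le (hw'.differentiable one_ne_zero x)
            (hφ.differentiable one_ne_zero x) (hwpos x) (hφ01 x) hL (hφL x)
    _ = (q + p) * L * (∫ x in B, w x ^ q) + q * L / L ^ p * ∫ x in B, e x := by
        rw [integral_add (hwq_int.const_mul _) (he_int.const_mul _), integral_const_mul,
          integral_const_mul]
    _ ≤ (q + q) * L * (∫ x in B, w x ^ q) +
          q * L / L ^ p * ((2 * p) ^ p * (L ^ p * ∫ x in B, w x ^ q)) := by
        have : 0 ≤ ∫ x in B, w x ^ q := integral_nonneg fun x ↦ Real.rpow_nonneg (hwpos x).le q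
        gcongr
        exact hw.setIntegral_rpow_mul_norm_gradient_rpow_le hp hwpos hpq hB hφ hφB
          (fun x ↦ (hφ01 x).1) hφL
    _ = _ := by
        have hLp : L ^ p ≠ 0 := (Real.rpow_pos_of_pos hL p).ne'
        field_simp
        ring

lemma exists_moser_step (hp : 1 < p) (hχ : Real.HolderConjugate (finrank ℝ E) χ) :
    ∃ C : ℝ, 0 < C ∧ ∀ w : E → ℝ, IsPSubharmonic p w → (∀ x, 0 < w x) →
      ∀ (q : ℝ) (c : E) (ρ' ρ : ℝ), p ≤ q → 0 < ρ' → ρ' < ρ →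
        ∫ x in closedBall c ρ', w x ^ (q * χ) ≤
          (C * (q / (ρ - ρ')) * ∫ x in closedBall c ρ, w x ^ q) ^ χ := by
  obtain ⟨K, hK, hcutoff⟩ := exists_cutoff E
  obtain ⟨S, hS, hsobolev⟩ := exists_integral_rpow_le_integral_norm_gradient hχ
  refine ⟨S * (2 + (2 * p) ^ p) * K, by positivity, fun w hw hwpos q c ρ' ρ hpq hρ' hρ ↦ ?_⟩
  have hp0 : 0 < p := one_pos.trans hp
  have hχ0 : 0 < χ := hχ.symm.pos
  obtain ⟨φ, hφ, hφsupp, hφ01, hφ1, hφK⟩ := hcutoff c ρ' ρ hρ' hρ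
  set g : E → ℝ := fun x ↦ w x ^ q * φ x ^ p
  have hφc : HasCompactSupport φ :=
    (isCompact_closedBall c ρ).of_isClosed_subset (isClosed_tsupport φ) hφsupp
  have hg : ContDiff ℝ 1 g := contDiff_rpow_mul_rpow hp.le q hw.contDiff hwpos hφ
  have hgc : HasCompactSupport g :=
    (hφc.comp_left (g := (· ^ p)) (Real.zero_rpow hp0.ne')).mul_left
  have hgrad := hw.integral_norm_gradient_rpow_mul_rpow_le hp hwpos hpq
    (isCompact_closedBall c ρ) hφ hφsupp hφ01 (div_pos hK (sub_pos.2 hρ))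
    fun x ↦ (norm_gradient φ x).trans_le (hφK x)
  have hg_int : Integrable fun x ↦ |g x| ^ χ :=
    (hg.continuous.abs.rpow_const fun _ ↦ Or.inr hχ0.le).integrable_of_hasCompactSupport
      (hgc.comp_left (g := fun t ↦ |t| ^ χ) (by rw [abs_zero, Real.zero_rpow hχ0.ne']))
  calc ∫ x in closedBall c ρ', w x ^ (q * χ) = ∫ x in closedBall c ρ', |g x| ^ χ := by
        refine setIntegral_congr_fun measurableSet_closedBall fun x hx ↦ ?_
        simp only [g, hφ1 x hx, Real.one_rpow, mul_one]
        rw [abs_of_pos (Real.rpow_pos_of_pos (hwpos x) q), Real.rpow_mul (hwpos x).le]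
    _ ≤ ∫ x, |g x| ^ χ := setIntegral_le_integral hg_int (.of_forall fun _ ↦ by positivity)
    _ ≤ (S * ∫ x, ‖gradient g x‖) ^ χ := hsobolev g hg hgc
    _ ≤ (S * ((2 + (2 * p) ^ p) * q * (K / (ρ - ρ')) * ∫ x in closedBall c ρ, w x ^ q)) ^ χ := by
        gcongr
    _ = _ := by ring_nf

end Moser

section Iteration

open Metric Set Filter Topology Module

lemma exists_mul_le_rpow_of_le_rpow {χ A b : ℝ} (hχ : 1 < χ) (hA : 0 < A) (hb : 1 ≤ b) :
    ∃ L : ℝ, 0 < L ∧ ∀ I : ℕ → ℝ, (∀ j, 0 ≤ I j) → (∀ j, I (j + 1) ≤ (A * b ^ j * I j) ^ χ) →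
      ∀ j, L * I j ≤ (L * I 0) ^ χ ^ j := by
  obtain ⟨c, rfl⟩ : ∃ c, Real.exp c = A := ⟨_, Real.exp_log hA⟩
  obtain ⟨k, rfl⟩ : ∃ k, Real.exp k = b := ⟨_, Real.exp_log (one_pos.trans_le hb)⟩
  have hχ1 : 0 < χ - 1 := sub_pos.2 hχ
  set a := χ / (χ - 1) with ha
  set l := (χ * c + a * k) / (χ - 1) with hl
  refine ⟨Real.exp l, Real.exp_pos l, fun I hI0 hI j ↦ ?_⟩
  -- With this weight the recursion becomes `J (j + 1) ≤ J j ^ χ`.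
  let J : ℕ → ℝ := fun j ↦ Real.exp (l + j * a * k) * I j
  have hJ (j : ℕ) : J j ≤ (Real.exp l * I 0) ^ χ ^ j := by
    induction j with
    | zero => simp [J]
    | succ j ih =>
      calc Real.exp (l + (j + 1 : ℕ) * a * k) * I (j + 1)
          ≤ Real.exp (l + (j + 1 : ℕ) * a * k) * (Real.exp c * Real.exp k ^ j * I j) ^ χ := by
            gcongr
            exact hI j
        _ = J j ^ χ := by
            rw [← Real.exp_nat_mul, ← Real.exp_add, Real.mul_rpow (Real.exp_pos _).le (hI0 j),
              Real.mul_rpow (Real.exp_pos _).le (hI0 j), ← Real.exp_mul, ← Real.exp_mul,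
              ← mul_assoc, ← Real.exp_add]
            congr 2
            rw [hl, ha]
            push_cast
            field_simp
            ring
        _ ≤ ((Real.exp l * I 0) ^ χ ^ j) ^ χ :=
            Real.rpow_le_rpow (mul_nonneg (Real.exp_pos _).le (hI0 j)) ih (by linarith)
        _ = _ := by
            rw [← Real.rpow_mul (mul_nonneg (Real.exp_pos l).le (hI0 0)), pow_succ]
  refine le_trans ?_ (hJ j)
  have hk : 0 ≤ k := Real.one_le_exp_iff.1 hb
  refine mul_le_mul_of_nonneg_right (Real.exp_le_exp.2 ?_) (hI0 j)
  exact le_add_of_nonneg_right (by positivity)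

lemma le_of_forall_mul_setIntegral_rpow_le {X : Type*} [MetricSpace X] [ProperSpace X]
    [MeasurableSpace X] [BorelSpace X] {μ : Measure X} [IsFiniteMeasureOnCompacts μ]
    [μ.IsOpenPosMeasure] {f : X → ℝ} (hf : Continuous f) (hf0 : ∀ x, 0 ≤ f x) {x₀ : X} {r : ℝ}
    (hr : 0 < r) {q : ℕ → ℝ} (hq : Tendsto q atTop atTop) {L M : ℝ} (hL : 0 < L) (hM : 0 ≤ M)
    (h : ∀ j, L * ∫ x in closedBall x₀ r, f x ^ q j ∂μ ≤ M ^ q j) : f x₀ ≤ M := by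
  by_contra! hlt
  obtain ⟨T, hMT, hTf⟩ := exists_between hlt
  have hT : 0 < T := hM.trans_lt hMT
  set v := (μ.restrict (closedBall x₀ r)).real {x | T ≤ f x}
  have hfin : μ (closedBall x₀ r) < ⊤ := (isCompact_closedBall x₀ r).measure_lt_top
  have : IsFiniteMeasure (μ.restrict (closedBall x₀ r)) := isFiniteMeasure_restrict.2 hfin.ne
  have hv : 0 < v := by
    have hnhds : {x | T ≤ f x} ∩ closedBall x₀ r ∈ 𝓝 x₀ :=
      inter_mem (hf.continuousAt.eventually (eventually_ge_nhds hTf)) (closedBall_mem_nhds x₀ hr)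
    refine ENNReal.toReal_pos (ne_of_gt ?_) (measure_ne_top _ _)
    rw [Measure.restrict_apply (measurableSet_le measurable_const hf.measurable)]
    exact Measure.measure_pos_of_mem_nhds μ hnhds
  have hbound (j : ℕ) (hj : 0 ≤ q j) : L * v ≤ (M / T) ^ q j := by
    have hint : IntegrableOn (fun x ↦ f x ^ q j) (closedBall x₀ r) μ :=
      (hf.rpow_const fun _ ↦ Or.inr hj).continuousOn.integrableOn_compact (isCompact_closedBall _ _)
    have hmarkov := mul_meas_ge_le_integral_of_nonneg
      (.of_forall fun x ↦ Real.rpow_nonneg (hf0 x) (q j)) hint (T ^ q j)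
    have hsubset : v ≤ (μ.restrict (closedBall x₀ r)).real {x | T ^ q j ≤ f x ^ q j} :=
      measureReal_mono fun x hx ↦ Real.rpow_le_rpow hT.le hx hj
    rw [Real.div_rpow hM hT.le, le_div_iff₀ (by positivity)]
    calc L * v * T ^ q j = L * (T ^ q j * v) := by ring
      _ ≤ L * ∫ x in closedBall x₀ r, f x ^ q j ∂μ := by
          gcongr
          exact le_trans (by gcongr) hmarkov
      _ ≤ M ^ q j := h j
  have hlim : Tendsto (fun j ↦ (M / T) ^ q j) atTop (𝓝 0) :=
    (tendsto_rpow_atTop_of_base_lt_one _ (neg_one_lt_zero.trans_le (by positivity))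
      ((div_lt_one hT).2 hMT)).comp hq
  have := ge_of_tendsto hlim ((hq.eventually_ge_atTop 0).mono hbound)
  nlinarith

end Iteration

section LocalBoundedness

open Metric Set Filter Module

variable {E : Type*} [NormedAddCommGroup E] [InnerProductSpace ℝ E] [FiniteDimensional ℝ E]
  [MeasurableSpace E] [BorelSpace E] {p : ℝ}

lemma exists_mul_setIntegral_rpow_le (hE : 1 < finrank ℝ E) (hp : 1 < p) :
    ∃ χ L : ℝ, 1 < χ ∧ 0 < L ∧ ∀ w : E → ℝ, IsPSubharmonic p w → (∀ x, 0 < w x) → ∀ c (j : ℕ),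
      L * ∫ x in closedBall c (1 / 2), w x ^ (p * χ ^ j) ≤
        (L * ∫ x in closedBall c 1, w x ^ p) ^ χ ^ j := by
  have hχ := Real.HolderConjugate.conjExponent (p := finrank ℝ E) (by exact_mod_cast hE)
  set χ := Real.conjExponent (finrank ℝ E)
  have hχ1 : 1 < χ := hχ.symm.lt
  have : 0 < χ := one_pos.trans hχ1
  have hp0 : 0 < p := one_pos.trans hp
  obtain ⟨C, hC, hstep⟩ := exists_moser_step hp hχ
  obtain ⟨L, hL, hiter⟩ := exists_mul_le_rpow_of_le_rpow hχ1 (A := C * (4 * p)) (b := 2 * χ)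
    (by positivity) (by linarith)
  refine ⟨χ, L, hχ1, hL, fun w hw hwpos c j ↦ ?_⟩
  let ρ : ℕ → ℝ := fun j ↦ 1 / 2 + (1 / 2) ^ (j + 1)
  let I : ℕ → ℝ := fun j ↦ ∫ x in closedBall c (ρ j), w x ^ (p * χ ^ j)
  have hI0 (j : ℕ) : 0 ≤ I j := integral_nonneg fun x ↦ Real.rpow_nonneg (hwpos x).le _
  have hρ_sub (j : ℕ) : ρ j - ρ (j + 1) = (4 * 2 ^ j)⁻¹ := by
    simp only [ρ, pow_succ, one_div, inv_pow, mul_inv]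
    ring
  have hρ_pos (j : ℕ) : 1 / 2 < ρ j := lt_add_of_pos_right _ (by positivity)
  have hI (j : ℕ) : I (j + 1) ≤ (C * (4 * p) * (2 * χ) ^ j * I j) ^ χ := by
    have h := hstep w hw hwpos (p * χ ^ j) c (ρ (j + 1)) (ρ j)
      (le_mul_of_one_le_right hp0.le (one_le_pow₀ hχ1.le)) (by linarith [hρ_pos (j + 1)])
      (sub_pos.1 ((hρ_sub j).symm ▸ by positivity))
    rw [hρ_sub, mul_assoc p, ← pow_succ, div_inv_eq_mul] at h
    refine h.trans_eq ?_
    congr 2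
    rw [mul_pow]
    ring
  have hI_zero : I 0 = ∫ x in closedBall c 1, w x ^ p := by
    simp only [I, ρ, pow_zero, mul_one]
    norm_num
  rw [← hI_zero]
  refine le_trans ?_ (hiter I hI0 hI j)
  gcongr
  refine setIntegral_mono_set ?_ (.of_forall fun x ↦ Real.rpow_nonneg (hwpos x).le _)
    (closedBall_subset_closedBall (hρ_pos j).le).eventuallyLE
  exact (hw.contDiff.continuous.rpow_const fun x ↦
    Or.inl (hwpos x).ne').continuousOn.integrableOn_compact (isCompact_closedBall _ _)

lemma exists_rpow_le_setIntegral_rpow (hE : 1 < finrank ℝ E) (hp : 1 < p) :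
    ∃ D : ℝ, 0 < D ∧ ∀ w : E → ℝ, IsPSubharmonic p w → (∀ x, 0 < w x) →
      ∀ c, w c ^ p ≤ D * ∫ x in closedBall c 1, w x ^ p := by
  obtain ⟨χ, L, hχ, hL, hbound⟩ := exists_mul_setIntegral_rpow_le (E := E) hE hp
  refine ⟨L, hL, fun w hw hwpos c ↦ ?_⟩
  have hwp0 (x : E) : 0 ≤ w x ^ p := Real.rpow_nonneg (hwpos x).le p
  have hwp_cont : Continuous fun x ↦ w x ^ p :=
    hw.contDiff.continuous.rpow_const fun x ↦ Or.inl (hwpos x).ne'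
  refine le_of_forall_mul_setIntegral_rpow_le (μ := volume) hwp_cont hwp0 one_half_pos
    (tendsto_pow_atTop_atTop_of_one_lt hχ) hL (mul_nonneg hL.le (integral_nonneg hwp0)) fun j ↦ ?_
  simpa only [← Real.rpow_mul (hwpos _).le] using hbound w hw hwpos c j

end LocalBoundedness

section Poincare

open Metric Set Module

lemma lintegral_rpow_le_lintegral_rpow {α : Type*} [MeasurableSpace α] {μ : Measure α}
    [IsProbabilityMeasure μ] {p : ℝ} (hp : 1 ≤ p) {f : α → ENNReal} (hf : AEMeasurable f μ) :
    (∫⁻ x, f x ∂μ) ^ p ≤ ∫⁻ x, f x ^ p ∂μ := by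
  have hp0 : 0 < p := one_pos.trans_le hp
  have h := eLpNorm'_le_eLpNorm'_of_exponent_le one_pos hp μ hf.aestronglyMeasurable
  simp only [eLpNorm'_eq_lintegral_enorm, enorm_eq_self, ENNReal.rpow_one, div_one] at h
  simpa only [one_div, ENNReal.rpow_inv_rpow hp0.ne'] using ENNReal.rpow_le_rpow h hp0.le

lemma setLIntegral_comp_add_right_le {G : Type*} [AddGroup G] [MeasurableSpace G]
    [MeasurableAdd G] {μ : Measure G} [μ.IsAddRightInvariant] (f : G → ENNReal) {s t : Set G}
    {v : G} (hst : ∀ x ∈ s, x + v ∈ t) : ∫⁻ x in s, f (x + v) ∂μ ≤ ∫⁻ x in t, f x ∂μ :=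
  calc ∫⁻ x in s, f (x + v) ∂μ ≤ ∫⁻ x in (· + v) ⁻¹' t, f (x + v) ∂μ := lintegral_mono_set hst
    _ = ∫⁻ x in t, f x ∂μ := (measurePreserving_add_right μ v).setLIntegral_comp_preimage_emb
        (measurableEmbedding_addRight v) f t

variable {E F : Type*} [NormedAddCommGroup E] [NormedSpace ℝ E] [NormedAddCommGroup F]
  [NormedSpace ℝ F] {p : ℝ} {w : E → F}

lemma enorm_add_sub_rpow_le (hp : 1 ≤ p) (hw : ContDiff ℝ 1 w) (x h : E) :
    ‖w (x + h) - w x‖ₑ ^ p ≤ ‖h‖ₑ ^ p * ∫⁻ t in Icc (0 : ℝ) 1, ‖fderiv ℝ w (x + t • h)‖ₑ ^ p := by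
  let γ : ℝ → F := fun t ↦ w (x + t • h)
  have hp0 : 0 ≤ p := zero_le_one.trans hp
  have hderiv (t : ℝ) : deriv γ t = fderiv ℝ w (x + t • h) h := by
    have hline : HasDerivAt (fun t : ℝ ↦ x + t • h) h t := by
      simpa using ((hasDerivAt_id t).smul_const h).const_add x
    exact ((hw.differentiable one_ne_zero _).hasFDerivAt.comp_hasDerivAt t hline).deriv
  have hcont : Continuous fun t : ℝ ↦ ‖fderiv ℝ w (x + t • h)‖ₑ :=
    ((hw.continuous_fderiv one_ne_zero).comp (by fun_prop)).enorm
  have hprob : IsProbabilityMeasure (volume.restrict (Icc (0 : ℝ) 1)) := ⟨by simp⟩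
  have hftc := enorm_sub_le_lintegral_deriv_of_contDiffOn_Icc
    (hw.comp (by fun_prop : ContDiff ℝ 1 fun t : ℝ ↦ x + t • h)).contDiffOn zero_le_one
  simp only [Function.comp_apply, one_smul, zero_smul, add_zero] at hftc
  calc ‖w (x + h) - w x‖ₑ ^ p ≤ (∫⁻ t in Icc (0 : ℝ) 1, ‖h‖ₑ * ‖fderiv ℝ w (x + t • h)‖ₑ) ^ p := by
        refine ENNReal.rpow_le_rpow (hftc.trans (lintegral_mono fun t ↦ ?_)) hp0
        change ‖deriv γ t‖ₑ ≤ _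
        rw [hderiv, mul_comm]
        exact ContinuousLinearMap.le_opENorm _ _
    _ = ‖h‖ₑ ^ p * (∫⁻ t in Icc (0 : ℝ) 1, ‖fderiv ℝ w (x + t • h)‖ₑ) ^ p := by
        rw [lintegral_const_mul _ hcont.measurable, ENNReal.mul_rpow_of_nonneg _ _ hp0]
    _ ≤ _ := by
        gcongr
        exact lintegral_rpow_le_lintegral_rpow hp hcont.aemeasurable

variable [FiniteDimensional ℝ E] [MeasurableSpace E] [BorelSpace E] {μ : Measure E}
  [μ.IsAddHaarMeasure]

lemma lintegral_enorm_add_sub_rpow_le (hp : 1 ≤ p) (hw : ContDiff ℝ 1 w) (c h : E) (r : ℝ) :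
    ∫⁻ x in closedBall c r, ‖w (x + h) - w x‖ₑ ^ p ∂μ ≤
      ‖h‖ₑ ^ p * ∫⁻ x in closedBall c (r + ‖h‖), ‖fderiv ℝ w x‖ₑ ^ p ∂μ := by
  set G : E → ENNReal := fun x ↦ ‖fderiv ℝ w x‖ₑ ^ p
  have hG : Continuous G :=
    ENNReal.continuous_rpow_const.comp (hw.continuous_fderiv one_ne_zero).enorm
  have hseg (t : ℝ) (ht : t ∈ Icc (0 : ℝ) 1) : ∫⁻ x in closedBall c r, G (x + t • h) ∂μ ≤
      ∫⁻ x in closedBall c (r + ‖h‖), G x ∂μ := by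
    refine setLIntegral_comp_add_right_le G fun x hx ↦ ?_
    have hth : ‖t • h‖ ≤ ‖h‖ := by
      rw [norm_smul, Real.norm_of_nonneg ht.1]
      exact mul_le_of_le_one_left (norm_nonneg h) ht.2
    rw [mem_closedBall, dist_eq_norm] at hx ⊢
    calc ‖x + t • h - c‖ = ‖(x - c) + t • h‖ := by congr 1; abel
      _ ≤ r + ‖h‖ := norm_add_le_of_le hx hth
  calc ∫⁻ x in closedBall c r, ‖w (x + h) - w x‖ₑ ^ p ∂μ
      ≤ ∫⁻ x in closedBall c r, ‖h‖ₑ ^ p * (∫⁻ t in Icc (0 : ℝ) 1, G (x + t • h)) ∂μ :=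
        lintegral_mono fun x ↦ enorm_add_sub_rpow_le hp hw x h
    _ = ‖h‖ₑ ^ p * ∫⁻ t in Icc (0 : ℝ) 1, (∫⁻ x in closedBall c r, G (x + t • h) ∂μ) := by
        have hmeas : Measurable fun z : E × ℝ ↦ G (z.1 + z.2 • h) :=
          (hG.comp (by fun_prop)).measurable
        rw [lintegral_const_mul _ hmeas.lintegral_prod_right',
          lintegral_lintegral_swap hmeas.aemeasurable]
    _ ≤ ‖h‖ₑ ^ p * ∫⁻ _ in Icc (0 : ℝ) 1, (∫⁻ x in closedBall c (r + ‖h‖), G x ∂μ) :=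
        mul_le_mul_right (setLIntegral_mono measurable_const hseg) _
    _ = _ := by simp [G]

lemma lintegral_lintegral_enorm_sub_rpow_le (hp : 1 ≤ p) (hw : ContDiff ℝ 1 w) (c : E) (r : ℝ) :
    ∫⁻ y in closedBall c r, ∫⁻ x in closedBall c r, ‖w x - w y‖ₑ ^ p ∂μ ∂μ ≤
      μ (closedBall 0 (2 * r)) * (ENNReal.ofReal (2 * r) ^ p *
        ∫⁻ x in closedBall c (3 * r), ‖fderiv ℝ w x‖ₑ ^ p ∂μ) := by
  have : 0 ≤ p := zero_le_one.trans hp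
  calc ∫⁻ y in closedBall c r, ∫⁻ x in closedBall c r, ‖w x - w y‖ₑ ^ p ∂μ ∂μ
      ≤ ∫⁻ y in closedBall c r, ∫⁻ h in closedBall 0 (2 * r), ‖w (y + h) - w y‖ₑ ^ p ∂μ ∂μ := by
        refine setLIntegral_mono' measurableSet_closedBall fun y hy ↦ ?_
        have h := setLIntegral_comp_add_right_le (μ := μ) (fun h ↦ ‖w (y + h) - w y‖ₑ ^ p)
          (s := closedBall c r) (t := closedBall 0 (2 * r)) (v := -y) fun x hx ↦ by
            rw [mem_closedBall_zero_iff, ← sub_eq_add_neg, ← dist_eq_norm]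
            linarith [dist_triangle_right x y c, mem_closedBall.1 hx, mem_closedBall.1 hy]
        simpa only [add_neg_cancel_comm_assoc] using h
    _ = ∫⁻ h in closedBall 0 (2 * r), ∫⁻ y in closedBall c r, ‖w (y + h) - w y‖ₑ ^ p ∂μ ∂μ := by
        refine lintegral_lintegral_swap (Continuous.aemeasurable ?_)
        have := hw.continuous
        exact ENNReal.continuous_rpow_const.comp (Continuous.enorm (by fun_prop))
    _ ≤ ∫⁻ _ in closedBall (0 : E) (2 * r), ENNReal.ofReal (2 * r) ^ p *
          ∫⁻ x in closedBall c (3 * r), ‖fderiv ℝ w x‖ₑ ^ p ∂μ ∂μ := by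
        refine setLIntegral_mono measurable_const fun h hh ↦ ?_
        rw [mem_closedBall_zero_iff] at hh
        refine (lintegral_enorm_add_sub_rpow_le hp hw c h r).trans ?_
        gcongr
        · rw [← ofReal_norm]
          exact ENNReal.ofReal_le_ofReal hh
        · linarith
    _ = _ := by rw [setLIntegral_const, mul_comm]

lemma measure_mul_lintegral_enorm_rpow_le (hp : 1 ≤ p) (hw : ContDiff ℝ 1 w) {c : E} {r : ℝ}
    {S : Set E} (hS : S ⊆ closedBall c r) {M : ENNReal} (hM : ∀ y ∈ S, ‖w y‖ₑ ≤ M) :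
    μ S * ∫⁻ x in closedBall c r, ‖w x‖ₑ ^ p ∂μ ≤
      2 ^ (p - 1) * (μ (closedBall 0 (2 * r)) * (ENNReal.ofReal (2 * r) ^ p *
        ∫⁻ x in closedBall c (3 * r), ‖fderiv ℝ w x‖ₑ ^ p ∂μ) +
          μ (closedBall c r) * (M ^ p * μ (closedBall c r))) := by
  have hw' := hw.continuous
  have hcont : Continuous fun z : E × E ↦ ‖w z.2 - w z.1‖ₑ ^ p :=
    ENNReal.continuous_rpow_const.comp (Continuous.enorm (by fun_prop))
  have hpoint (y : E) (hy : y ∈ S) : ∫⁻ x in closedBall c r, ‖w x‖ₑ ^ p ∂μ ≤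
      2 ^ (p - 1) * ((∫⁻ x in closedBall c r, ‖w x - w y‖ₑ ^ p ∂μ) +
        M ^ p * μ (closedBall c r)) := by
    rw [← setLIntegral_const, ← lintegral_add_right _ measurable_const,
      ← lintegral_const_mul' _ _ (by finiteness)]
    refine lintegral_mono fun x ↦ (ENNReal.rpow_le_rpow ?_ (zero_le_one.trans hp)).trans
      (ENNReal.rpow_add_le_mul_rpow_add_rpow _ _ hp)
    calc ‖w x‖ₑ = ‖(w x - w y) + w y‖ₑ := by rw [sub_add_cancel]
      _ ≤ ‖w x - w y‖ₑ + M := (enorm_add_le _ _).trans (by gcongr; exact hM y hy)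
  have hmeas : Measurable fun y ↦ ∫⁻ x in closedBall c r, ‖w x - w y‖ₑ ^ p ∂μ :=
    hcont.measurable.lintegral_prod_right'
  calc μ S * ∫⁻ x in closedBall c r, ‖w x‖ₑ ^ p ∂μ
      = ∫⁻ _ in S, ∫⁻ x in closedBall c r, ‖w x‖ₑ ^ p ∂μ ∂μ := by rw [setLIntegral_const, mul_comm]
    _ ≤ ∫⁻ y in S, 2 ^ (p - 1) * ((∫⁻ x in closedBall c r, ‖w x - w y‖ₑ ^ p ∂μ) +
          M ^ p * μ (closedBall c r)) ∂μ :=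
        setLIntegral_mono ((hmeas.add_const _).const_mul _) hpoint
    _ ≤ ∫⁻ y in closedBall c r, 2 ^ (p - 1) * ((∫⁻ x in closedBall c r, ‖w x - w y‖ₑ ^ p ∂μ) +
          M ^ p * μ (closedBall c r)) ∂μ := lintegral_mono_set hS
    _ = 2 ^ (p - 1) * ((∫⁻ y in closedBall c r, ∫⁻ x in closedBall c r, ‖w x - w y‖ₑ ^ p ∂μ ∂μ) +
          μ (closedBall c r) * (M ^ p * μ (closedBall c r))) := by
        rw [lintegral_const_mul _ (hmeas.add_const _), lintegral_add_right _ measurable_const,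
          setLIntegral_const, mul_comm (μ _) (M ^ p * _)]
    _ ≤ _ := by
        gcongr
        exact lintegral_lintegral_enorm_sub_rpow_le hp hw c r

end Poincare

section LogarithmicEstimates

open Metric Set
open scoped NNReal

variable {E : Type*} [NormedAddCommGroup E] [InnerProductSpace ℝ E] [FiniteDimensional ℝ E]
  {p : ℝ} {u : E → ℝ}

lemma hasDerivAt_log_add_one_sub_log {t : ℝ} (ht : 0 < t) :
    HasDerivAt (fun t ↦ Real.log (t + 1) - Real.log t) (-(t⁻¹ * (t + 1)⁻¹)) t := by
  refine ((((hasDerivAt_id' t).add_const 1).log (by positivity)).sub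
    (Real.hasDerivAt_log ht.ne')).congr_deriv ?_
  field_simp
  ring

lemma log_add_one_sub_log_pos {t : ℝ} (ht : 0 < t) : 0 < Real.log (t + 1) - Real.log t :=
  sub_pos.2 (Real.log_lt_log ht (lt_add_one t))

lemma norm_fderiv_log_add_one_sub_log_le {x : E} (hu : DifferentiableAt ℝ u x) (hux : 0 < u x) :
    ‖fderiv ℝ (fun y ↦ Real.log (u y + 1) - Real.log (u y)) x‖ ≤ (u x)⁻¹ * ‖gradient u x‖ := by
  rw [← norm_gradient, gradient_comp (hasDerivAt_log_add_one_sub_log hux) hu, norm_smul, norm_neg,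
    Real.norm_of_nonneg (by positivity)]
  gcongr
  exact mul_le_of_le_one_right (by positivity) (inv_le_one_of_one_le₀ (by linarith))

variable [MeasurableSpace E] [BorelSpace E]

lemma IsPHarmonic.isPSubharmonic_log (hp : 1 < p) (hu : IsPHarmonic p u) (hupos : ∀ x, 0 < u x) :
    IsPSubharmonic p fun x ↦ Real.log (u x + 1) - Real.log (u x) := by
  have hpos {t : ℝ} (ht : t ∈ Ioi 0) : 0 < t ∧ 0 < t + 1 := ⟨ht, by linarith [mem_Ioi.1 ht]⟩
  refine hu.isPSubharmonic_comp hp isOpen_Ioi hupos (g := fun t ↦ t⁻¹ * (t + 1)⁻¹)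
    (fun t ht ↦ hasDerivAt_log_add_one_sub_log ht) ?_ (fun t ht ↦ ?_) fun s hs t ht hst ↦ ?_
  · exact (contDiffOn_id.inv fun t ht ↦ (hpos ht).1.ne').mul
      ((contDiffOn_id.add contDiffOn_const).inv fun t ht ↦ (hpos ht).2.ne')
  · have := hpos ht
    exact mul_pos (inv_pos.2 this.1) (inv_pos.2 this.2)
  · have hs' := hpos hs
    have := hpos ht
    exact mul_le_mul (inv_anti₀ hs'.1 hst) (inv_anti₀ hs'.2 (by linarith))
      (inv_nonneg.2 this.2.le) (inv_nonneg.2 hs'.1.le)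

lemma exists_setIntegral_inv_mul_norm_gradient_rpow_le (hp : 1 < p) {r : ℝ} (hr : 0 < r) :
    ∃ C : ℝ, ∀ u : E → ℝ, IsPHarmonic p u → (∀ x, 0 < u x) →
      ∫ x in closedBall 0 r, ((u x)⁻¹ * ‖gradient u x‖) ^ p ≤ C := by
  have hp0 : 0 < p := one_pos.trans hp
  obtain ⟨K, -, hcutoff⟩ := exists_cutoff E
  obtain ⟨φ, hφ, hφsupp, hφ01, hφ1, -⟩ := hcutoff 0 r (r + 1) hr (lt_add_one r)
  have hφc : HasCompactSupport φ :=
    (isCompact_closedBall 0 (r + 1)).of_isClosed_subset (isClosed_tsupport φ) hφsupp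
  refine ⟨(2 * p / |0 - p + 1|) ^ p * ∫ x, ‖gradient φ x‖ ^ p, fun u hu hupos ↦ ?_⟩
  have henergy := hu.caccioppoli (q := 0) hp hupos hφ hφc (fun x ↦ (hφ01 x).1) (by linarith)
  simp only [Real.rpow_zero, one_mul] at henergy
  have hrw (x : E) : u x ^ (0 - p) * ‖gradient u x‖ ^ p = ((u x)⁻¹ * ‖gradient u x‖) ^ p := by
    rw [zero_sub, Real.mul_rpow (inv_nonneg.2 (hupos x).le) (norm_nonneg _),
      Real.inv_rpow (hupos x).le, Real.rpow_neg (hupos x).le]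
  have hcont : Continuous fun x ↦ ((u x)⁻¹ * ‖gradient u x‖) ^ p :=
    ((hu.contDiff.continuous.inv₀ fun x ↦ (hupos x).ne').mul
      (continuous_gradient hu.contDiff).norm).rpow_const fun _ ↦ Or.inr hp0.le
  have hint : Integrable fun x ↦ φ x ^ p * ((u x)⁻¹ * ‖gradient u x‖) ^ p :=
    ((hφ.continuous.rpow_const fun _ ↦ Or.inr hp0.le).mul hcont).integrable_of_hasCompactSupport
      (hφc.comp_left (g := (· ^ p)) (Real.zero_rpow hp0.ne')).mul_right
  simp only [hrw] at henergy
  calc ∫ x in closedBall 0 r, ((u x)⁻¹ * ‖gradient u x‖) ^ p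
      = ∫ x in closedBall 0 r, φ x ^ p * ((u x)⁻¹ * ‖gradient u x‖) ^ p :=
        setIntegral_congr_fun measurableSet_closedBall fun x hx ↦ by
          simp only [hφ1 x hx, Real.one_rpow, one_mul]
    _ ≤ ∫ x, φ x ^ p * ((u x)⁻¹ * ‖gradient u x‖) ^ p :=
        setIntegral_le_integral hint (.of_forall fun x ↦ mul_nonneg
          (Real.rpow_nonneg (hφ01 x).1 p) (Real.rpow_nonneg (mul_nonneg
            (inv_nonneg.2 (hupos x).le) (norm_nonneg _)) p))
    _ ≤ _ := henergy

lemma exists_lintegral_fderiv_log_rpow_le (hp : 1 < p) {r : ℝ} (hr : 0 < r) :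
    ∃ C : ℝ≥0, ∀ u : E → ℝ, IsPHarmonic p u → (∀ x, 0 < u x) →
      ∫⁻ x in closedBall 0 r,
        ‖fderiv ℝ (fun y ↦ Real.log (u y + 1) - Real.log (u y)) x‖ₑ ^ p ≤ C := by
  have hp0 : 0 < p := one_pos.trans hp
  obtain ⟨C, hC⟩ := exists_setIntegral_inv_mul_norm_gradient_rpow_le (E := E) hp hr
  refine ⟨C.toNNReal, fun u hu hupos ↦ ?_⟩
  have hcont : Continuous fun x ↦ ((u x)⁻¹ * ‖gradient u x‖) ^ p :=
    ((hu.contDiff.continuous.inv₀ fun x ↦ (hupos x).ne').mul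
      (continuous_gradient hu.contDiff).norm).rpow_const fun _ ↦ Or.inr hp0.le
  have hnonneg (x : E) : 0 ≤ (u x)⁻¹ * ‖gradient u x‖ :=
    mul_nonneg (inv_nonneg.2 (hupos x).le) (norm_nonneg _)
  calc ∫⁻ x in closedBall 0 r, ‖fderiv ℝ (fun y ↦ Real.log (u y + 1) - Real.log (u y)) x‖ₑ ^ p
      ≤ ∫⁻ x in closedBall 0 r, ENNReal.ofReal (((u x)⁻¹ * ‖gradient u x‖) ^ p) := by
        refine lintegral_mono fun x ↦ ?_
        rw [← ofReal_norm, ENNReal.ofReal_rpow_of_nonneg (norm_nonneg _) hp0.le]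
        gcongr
        exact norm_fderiv_log_add_one_sub_log_le (hu.contDiff.differentiable one_ne_zero x)
          (hupos x)
    _ = ENNReal.ofReal (∫ x in closedBall 0 r, ((u x)⁻¹ * ‖gradient u x‖) ^ p) :=
        (ofReal_integral_eq_lintegral_ofReal
          (hcont.continuousOn.integrableOn_compact (isCompact_closedBall _ _))
          (.of_forall fun x ↦ Real.rpow_nonneg (hnonneg x) p)).symm
    _ ≤ C.toNNReal := ENNReal.ofReal_le_ofReal (hC u hu hupos)

lemma exists_lintegral_log_rpow_le (hp : 1 < p) {θ : ℝ} (hθ : 0 < θ) :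
    ∃ C : ℝ≥0, ∀ u : E → ℝ, IsPHarmonic p u → (∀ x, 0 < u x) →
      ENNReal.ofReal θ ≤ volume ({x | 1 ≤ u x} ∩ closedBall 0 1) →
        ∫⁻ x in closedBall 0 3, ‖Real.log (u x + 1) - Real.log (u x)‖ₑ ^ p ≤ C := by
  obtain ⟨K, hK⟩ := exists_lintegral_fderiv_log_rpow_le (E := E) (r := 3 * 3) hp (by norm_num)
  set V := fun r : ℝ ↦ volume (closedBall (0 : E) r)
  have hV (r : ℝ) : V r ≠ ⊤ := measure_closedBall_lt_top.ne
  set B := 2 ^ (p - 1) * (V (2 * 3) * (ENNReal.ofReal (2 * 3) ^ p * K) + V 3 * (1 ^ p * V 3))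
  have hB : B / ENNReal.ofReal θ ≠ ⊤ := by
    have := hV 3
    have := hV (2 * 3)
    exact ENNReal.div_ne_top (by finiteness) (ENNReal.ofReal_pos.2 hθ).ne'
  refine ⟨(B / ENNReal.ofReal θ).toNNReal, fun u hu hupos hmeas ↦ ?_⟩
  rw [ENNReal.coe_toNNReal hB, ENNReal.le_div_iff_mul_le
    (.inl (ENNReal.ofReal_pos.2 hθ).ne') (.inl ENNReal.ofReal_ne_top), mul_comm]
  have hle_one (y : E) (hy : y ∈ {x | 1 ≤ u x} ∩ closedBall 0 1) :
      ‖Real.log (u y + 1) - Real.log (u y)‖ₑ ≤ 1 := by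
    have huy : 1 ≤ u y := hy.1
    rw [← ofReal_norm, Real.norm_of_nonneg (log_add_one_sub_log_pos (hupos y)).le,
      ← Real.log_div (by linarith) (by linarith)]
    refine ENNReal.ofReal_le_one.2 ((Real.log_le_sub_one_of_pos (by positivity)).trans ?_)
    rw [sub_le_iff_le_add, div_le_iff₀ (hupos y)]
    linarith
  have hpoincare := measure_mul_lintegral_enorm_rpow_le (μ := volume) hp.le
    (hu.isPSubharmonic_log hp hupos).contDiff (inter_subset_right.trans
      (closedBall_subset_closedBall (by norm_num : (1 : ℝ) ≤ 3))) hle_one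
  refine le_trans (by gcongr) (hpoincare.trans ?_)
  simp only [B, V]
  gcongr
  exact hK u hu hupos

end LogarithmicEstimates

section ExpansionOfPositivity

open Metric Module Set
open scoped NNReal

lemma forall_mem_closedBall_iff {F : Type*} [NormedAddCommGroup F] [NormedSpace ℝ F] {x₀ : F}
    {r s : ℝ} (hr : 0 < r) {P : F → Prop} :
    (∀ x ∈ closedBall x₀ (r * s), P x) ↔ ∀ z ∈ closedBall 0 s, P (x₀ + r • z) := by
  have hmem (z : F) : x₀ + r • z ∈ closedBall x₀ (r * s) ↔ z ∈ closedBall 0 s := by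
    rw [mem_closedBall_iff_norm, add_sub_cancel_left, norm_smul, Real.norm_of_nonneg hr.le,
      mem_closedBall_zero_iff, mul_le_mul_iff_right₀ hr]
  refine ⟨fun h z hz ↦ h _ ((hmem z).2 hz), fun h x hx ↦ ?_⟩
  obtain ⟨z, rfl⟩ : ∃ z, x = x₀ + r • z :=
    ⟨r⁻¹ • (x - x₀), by rw [smul_inv_smul₀ hr.ne', add_sub_cancel]⟩
  exact h z ((hmem z).1 hx)

variable {E : Type*} [NormedAddCommGroup E] [InnerProductSpace ℝ E] [FiniteDimensional ℝ E]
  [MeasurableSpace E] [BorelSpace E] {p : ℝ}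

lemma exists_le_of_measure_le (hE : 1 < finrank ℝ E) (hp : 1 < p) {θ : ℝ} (hθ : 0 < θ) :
    ∃ c : ℝ, 0 < c ∧ c < 1 ∧ ∀ u : E → ℝ, IsPHarmonic p u → (∀ x, 0 < u x) →
      ENNReal.ofReal θ ≤ volume ({x | 1 ≤ u x} ∩ closedBall 0 1) →
        ∀ x ∈ closedBall 0 2, c ≤ u x := by
  have hp0 : 0 < p := one_pos.trans hp
  obtain ⟨D, hD, hsup⟩ := exists_rpow_le_setIntegral_rpow hE hp
  obtain ⟨C, hC⟩ := exists_lintegral_log_rpow_le (E := E) hp hθ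
  set M : ℝ := (D * C) ^ p⁻¹
  have hM : 0 ≤ M := by positivity
  refine ⟨Real.exp (-(M + 1)), Real.exp_pos _, Real.exp_lt_one_iff.2 (by linarith),
    fun u hu hupos hmeas x hx ↦ ?_⟩
  set w := fun y ↦ Real.log (u y + 1) - Real.log (u y)
  have hwpos (y : E) : 0 < w y := log_add_one_sub_log_pos (hupos y)
  have hwsub : IsPSubharmonic p w := hu.isPSubharmonic_log hp hupos
  have hball : closedBall x 1 ⊆ closedBall 0 3 :=
    closedBall_subset_closedBall' (by linarith [mem_closedBall.1 hx])
  have hint : ∫ y in closedBall x 1, w y ^ p ≤ C := by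
    rw [integral_eq_lintegral_of_nonneg_ae (.of_forall fun y ↦ Real.rpow_nonneg (hwpos y).le p)
      (hwsub.contDiff.continuous.rpow_const fun _ ↦ Or.inr hp0.le).aestronglyMeasurable]
    refine ENNReal.toReal_le_coe_of_le_coe (le_trans ?_ (hC u hu hupos hmeas))
    refine (lintegral_mono_set hball).trans (lintegral_mono fun y ↦ ?_)
    rw [← ofReal_norm, Real.norm_of_nonneg (hwpos y).le,
      ENNReal.ofReal_rpow_of_nonneg (hwpos y).le hp0.le]
  have hwM : w x ≤ M := by
    rw [Real.le_rpow_inv_iff_of_pos (hwpos x).le (by positivity) hp0]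
    exact (hsup w hwsub hwpos x).trans (by gcongr)
  rw [← Real.le_log_iff_exp_le (hupos x)]
  have hlog : 0 < Real.log (u x + 1) := Real.log_pos (by linarith [hupos x])
  linarith [show w x = Real.log (u x + 1) - Real.log (u x) from rfl]

lemma setIntegral_rpow_le_of_le {α : Type*} [MeasurableSpace α] {μ : Measure α} {B : Set α}
    {f : α → ℝ} (hp : 0 ≤ p) (hB : MeasurableSet B) (hμB : μ B ≠ ⊤) (hf : Measurable f)
    (hf0 : ∀ x, 0 ≤ f x) {η K : ℝ} (hη : 0 ≤ η) (hfK : ∀ x ∈ B, f x ≤ K) :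
    ∫ x in B, f x ^ p ∂μ ≤ η ^ p * μ.real B + K ^ p * μ.real ({x | η ≤ f x} ∩ B) := by
  set S := {x | η ≤ f x}
  have hS : MeasurableSet S := measurableSet_le measurable_const hf
  have hint : IntegrableOn (fun _ ↦ η ^ p) B μ := integrableOn_const hμB
  have hintS : IntegrableOn (S.indicator fun _ ↦ K ^ p) B μ :=
    IntegrableOn.indicator (integrableOn_const hμB) hS
  calc ∫ x in B, f x ^ p ∂μ ≤ ∫ x in B, (η ^ p + S.indicator (fun _ ↦ K ^ p) x) ∂μ := by
        refine integral_mono_of_nonneg (.of_forall fun x ↦ Real.rpow_nonneg (hf0 x) p)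
          (hint.add hintS) ((ae_restrict_mem hB).mono fun x hx ↦ ?_)
        by_cases hxS : x ∈ S
        · simp only [indicator_of_mem hxS]
          exact (Real.rpow_le_rpow (hf0 x) (hfK x hx) hp).trans
            (le_add_of_nonneg_left (Real.rpow_nonneg hη p))
        · simp only [indicator_of_notMem hxS, add_zero]
          exact Real.rpow_le_rpow (hf0 x) (not_le.1 hxS).le hp
    _ = η ^ p * μ.real B + K ^ p * μ.real (S ∩ B) := by
        rw [integral_add hint hintS, setIntegral_const, integral_indicator_const _ hS,
          measureReal_restrict_apply hS, smul_eq_mul, smul_eq_mul, mul_comm, mul_comm (K ^ p)]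

lemma exists_measure_superlevel_ge (hE : 1 < finrank ℝ E) (hp : 1 < p) :
    ∃ η θ : ℝ, 0 < η ∧ 0 < θ ∧ ∀ w : E → ℝ, IsPSubharmonic p w → (∀ x, 0 < w x) → w 0 = 1 →
      (∀ x ∈ closedBall 0 1, w x ≤ 2) →
        ENNReal.ofReal θ ≤ volume ({x | η ≤ w x} ∩ closedBall 0 1) := by
  have hp0 : 0 < p := one_pos.trans hp
  obtain ⟨D, hD, hsup⟩ := exists_rpow_le_setIntegral_rpow hE hp
  set B := closedBall (0 : E) 1
  have hB : volume B ≠ ⊤ := measure_closedBall_lt_top.ne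
  have hV : 0 < volume.real B :=
    ENNReal.toReal_pos (measure_closedBall_pos volume _ one_pos).ne' hB
  refine ⟨(2 * D * volume.real B)⁻¹ ^ p⁻¹, (2 * D * 2 ^ p)⁻¹, by positivity, by positivity,
    fun w hw hwpos hw0 hw2 ↦ ?_⟩
  set η := (2 * D * volume.real B)⁻¹ ^ p⁻¹
  have hη : η ^ p = (2 * D * volume.real B)⁻¹ := Real.rpow_inv_rpow (by positivity) hp0.ne'
  have hone := (hsup w hw hwpos 0).trans (mul_le_mul_of_nonneg_left
    (setIntegral_rpow_le_of_le hp0.le measurableSet_closedBall hB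
      hw.contDiff.continuous.measurable (fun x ↦ (hwpos x).le)
      (by positivity : 0 ≤ η) hw2) hD.le)
  have hhalf : D * ((2 * D * volume.real B)⁻¹ * volume.real B) = 1 / 2 := by field_simp
  rw [hw0, Real.one_rpow, hη, mul_add, hhalf] at hone
  refine ENNReal.ofReal_le_of_le_toReal ?_
  rw [inv_le_iff_one_le_mul₀' (by positivity)]
  change 1 ≤ _ * volume.real ({x | η ≤ w x} ∩ B)
  linarith

lemma IsPHarmonic.exists_mul_le_on_double (hE : 1 < finrank ℝ E) (hp : 1 < p) :
    ∃ c : ℝ, 0 < c ∧ c < 1 ∧ ∀ u : E → ℝ, IsPHarmonic p u → (∀ x, 0 < u x) →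
      ∀ (x₀ : E) (r k : ℝ), 0 < r → 0 < k → (∀ x ∈ closedBall x₀ r, k ≤ u x) →
        ∀ x ∈ closedBall x₀ (r * 2), c * k ≤ u x := by
  have hV : 0 < volume.real (closedBall (0 : E) 1) :=
    ENNReal.toReal_pos (measure_closedBall_pos volume _ one_pos).ne' measure_closedBall_lt_top.ne
  obtain ⟨c, hc0, hc1, hc⟩ := exists_le_of_measure_le hE hp hV
  refine ⟨c, hc0, hc1, fun u hu hupos x₀ r k hr hk hku ↦
    (forall_mem_closedBall_iff hr).2 fun z hz ↦ ?_⟩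
  rw [← le_inv_mul_iff₀' hk]
  refine hc _ ((hu.comp_add_smul x₀ hr.ne').const_mul k⁻¹)
    (fun z ↦ mul_pos (inv_pos.2 hk) (hupos _)) ?_ z hz
  have hone : closedBall 0 1 ⊆ {z | 1 ≤ k⁻¹ * u (x₀ + r • z)} := fun z hz ↦ by
    rw [← mul_one r, forall_mem_closedBall_iff hr] at hku
    exact (le_inv_mul_iff₀ hk).2 (by simpa using hku z hz)
  rw [inter_eq_right.2 hone, ofReal_measureReal measure_closedBall_lt_top.ne]

lemma IsPHarmonic.exists_pow_mul_le (hE : 1 < finrank ℝ E) (hp : 1 < p) :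
    ∃ c : ℝ, 0 < c ∧ c < 1 ∧ ∀ u : E → ℝ, IsPHarmonic p u → (∀ x, 0 < u x) →
      ∀ (x₀ : E) (r k : ℝ), 0 < r → 0 < k → (∀ x ∈ closedBall x₀ r, k ≤ u x) →
        ∀ (n : ℕ), ∀ x ∈ closedBall x₀ (r * 2 ^ n), c ^ n * k ≤ u x := by
  obtain ⟨c, hc0, hc1, hc⟩ := exists_mul_le_on_double hE hp
  refine ⟨c, hc0, hc1, fun u hu hupos x₀ r k hr hk hku n ↦ ?_⟩
  induction n with
  | zero => simpa using hku
  | succ n ih =>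
    simpa only [pow_succ (2 : ℝ), pow_succ' c, mul_assoc] using
      hc u hu hupos x₀ _ _ (by positivity) (by positivity) ih

lemma IsPHarmonic.exists_mul_le_of_le_two_mul (hE : 1 < finrank ℝ E) (hp : 1 < p) :
    ∃ η : ℝ, 0 < η ∧ ∀ u : E → ℝ, IsPHarmonic p u → (∀ x, 0 < u x) →
      ∀ (x₀ : E) (r : ℝ), 0 < r → (∀ x ∈ closedBall x₀ r, u x ≤ 2 * u x₀) →
        ∀ x ∈ closedBall x₀ r, η * u x₀ ≤ u x := by
  obtain ⟨η, θ, hη, hθ, hmeas⟩ := exists_measure_superlevel_ge hE hp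
  obtain ⟨c, hc0, -, hc⟩ := exists_le_of_measure_le hE hp hθ
  refine ⟨c * η, by positivity, fun u hu hupos x₀ r hr hu2 ↦ ?_⟩
  rw [← mul_one r, forall_mem_closedBall_iff hr] at hu2 ⊢
  intro z hz
  have hM := hupos x₀
  set v : E → ℝ := fun z ↦ (u x₀)⁻¹ * u (x₀ + r • z) with hv
  have hvharm : IsPHarmonic p v := (hu.comp_add_smul x₀ hr.ne').const_mul (u x₀)⁻¹
  have hvpos (z : E) : 0 < v z := mul_pos (inv_pos.2 hM) (hupos _)
  have hv0 : v 0 = 1 := by simp [hv, hM.ne']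
  have hv2 (z : E) (hz : z ∈ closedBall 0 1) : v z ≤ 2 :=
    (inv_mul_le_iff₀' hM).2 (hu2 z hz)
  have hlevel : {z | 1 ≤ η⁻¹ * v z} = {z | η ≤ v z} := by
    ext z
    simp only [mem_ofPred_eq, le_inv_mul_iff₀ hη, mul_one]
  have hcv : c ≤ η⁻¹ * v z := hc _ (hvharm.const_mul η⁻¹)
    (fun z ↦ mul_pos (inv_pos.2 hη) (hvpos z))
    (hlevel ▸ hmeas v (hvharm.isPSubharmonic hp) hvpos hv0 hv2) z
    (closedBall_subset_closedBall one_le_two hz)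
  rwa [le_inv_mul_iff₀' hη, le_inv_mul_iff₀' hM] at hcv

end ExpansionOfPositivity

section Harnack

open Metric Module Set

lemma exists_mul_rpow_le_and_le_two_mul {X : Type*} [PseudoMetricSpace X] [ProperSpace X] {γ : ℝ}
    (hγ : 0 < γ) :
    ∃ σ : ℝ, 0 < σ ∧ σ < 1 ∧ ∀ u : X → ℝ, Continuous u → (∀ x, 0 < u x) →
      ∀ (z : X) (R : ℝ), 0 < R → ∃ (x : X) (d : ℝ), 0 < d ∧ dist x z + d = R ∧
        u z * R ^ γ ≤ u x * d ^ γ ∧ ∀ y ∈ closedBall x (σ * d), u y ≤ 2 * u x := by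
  set s : ℝ := 2⁻¹ ^ γ⁻¹
  have hs0 : 0 < s := by positivity
  have hs1 : s < 1 := Real.rpow_lt_one (by norm_num) (by norm_num) (by positivity)
  have hsγ : s ^ γ = 2⁻¹ := Real.rpow_inv_rpow (by norm_num) hγ.ne'
  refine ⟨1 - s, by linarith, by linarith, fun u hu hupos z R hR ↦ ?_⟩
  have hcont : Continuous fun x ↦ u x * (R - dist x z) ^ γ :=
    hu.mul ((by fun_prop : Continuous fun x ↦ R - dist x z).rpow_const fun _ ↦ Or.inr hγ.le)
  obtain ⟨x, hx, hmax⟩ := (isCompact_closedBall z R).exists_isMaxOn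
    (nonempty_closedBall.2 hR.le) hcont.continuousOn
  have hz : u z * R ^ γ ≤ u x * (R - dist x z) ^ γ := by
    simpa using hmax (mem_closedBall_self hR.le)
  have hd : 0 < R - dist x z := by
    refine (sub_nonneg.2 (mem_closedBall.1 hx)).lt_of_ne fun h ↦ ?_
    rw [← h, Real.zero_rpow hγ.ne', mul_zero] at hz
    exact hz.not_gt (mul_pos (hupos z) (Real.rpow_pos_of_pos hR γ))
  refine ⟨x, R - dist x z, hd, by ring, hz, fun y hy ↦ ?_⟩
  have hyR : s * (R - dist x z) ≤ R - dist y z := by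
    linarith [mem_closedBall.1 hy, dist_triangle y x z]
  have hsd : 0 < s * (R - dist x z) := by positivity
  have hle : u y * (s * (R - dist x z)) ^ γ ≤ u x * (R - dist x z) ^ γ :=
    (mul_le_mul_of_nonneg_left (Real.rpow_le_rpow hsd.le hyR hγ.le) (hupos y).le).trans
      (hmax (mem_closedBall.2 (by linarith)))
  rw [Real.mul_rpow hs0.le hd.le, hsγ, ← mul_assoc] at hle
  linarith [le_of_mul_le_mul_right hle (Real.rpow_pos_of_pos hd γ)]

lemma exists_le_two_pow_and_rpow_neg_le {t γ : ℝ} (ht : 1 ≤ t) (hγ : 0 ≤ γ) :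
    ∃ n : ℕ, t ≤ 2 ^ n ∧ (2 * t) ^ (-γ) ≤ ((2 : ℝ) ^ (-γ)) ^ n := by
  obtain ⟨n, hn, htn⟩ := exists_nat_pow_near ht one_lt_two
  refine ⟨n + 1, htn.le, ?_⟩
  rw [Real.rpow_pow_comm zero_le_two]
  exact Real.rpow_le_rpow_of_nonpos (by positivity) (by rw [pow_succ']; gcongr) (neg_nonpos.2 hγ)

variable {E : Type*} [NormedAddCommGroup E] [InnerProductSpace ℝ E] [FiniteDimensional ℝ E]
  [MeasurableSpace E] [BorelSpace E] {p : ℝ}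

theorem IsPHarmonic.harnack (hE : 1 < finrank ℝ E) (hp : 1 < p) :
    ∃ κ : ℝ, 0 < κ ∧ ∀ u : E → ℝ, IsPHarmonic p u → (∀ x, 0 < u x) →
      ∀ z y, κ * u z ≤ u y := by
  obtain ⟨c, hc0, hc1, hexpand⟩ := exists_pow_mul_le (E := E) hE hp
  obtain ⟨η, hη, hstart⟩ := exists_mul_le_of_le_two_mul (E := E) hE hp
  set γ := -Real.logb 2 c
  have hγ : 0 < γ := neg_pos.2 (Real.logb_neg one_lt_two hc0 hc1)
  have hcγ : (2 : ℝ) ^ (-γ) = c := by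
    rw [neg_neg, Real.rpow_logb two_pos (by norm_num) hc0]
  obtain ⟨σ, hσ0, hσ1, hpoint⟩ := exists_mul_rpow_le_and_le_two_mul (X := E) hγ
  refine ⟨(4 / σ) ^ (-γ) * η, by positivity, fun u hu hupos z y ↦ ?_⟩
  have hR : 0 < dist y z + 1 := by positivity
  obtain ⟨x, d, hd, hxd, hzx, hx2⟩ := hpoint u hu.contDiff.continuous hupos z (dist y z + 1) hR
  set R := dist y z + 1
  have hdR : d ≤ R := by linarith [dist_nonneg (x := x) (y := z)]
  have hσd : 0 < σ * d := by positivity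
  obtain ⟨n, hn, hcn⟩ := exists_le_two_pow_and_rpow_neg_le (t := 2 * R / (σ * d))
    ((one_le_div hσd).2 (by nlinarith)) hγ.le
  have hy : y ∈ closedBall x (σ * d * 2 ^ n) := by
    rw [div_le_iff₀' hσd] at hn
    exact mem_closedBall.2 (by linarith [dist_triangle_right y x z])
  calc (4 / σ) ^ (-γ) * η * u z
      ≤ (4 / σ) ^ (-γ) * η * (u x * (R / d) ^ (-γ)) := by
        gcongr
        rw [Real.rpow_neg (by positivity), Real.div_rpow hR.le hd.le, inv_div, ← mul_div_assoc,
          le_div_iff₀ (Real.rpow_pos_of_pos hR γ)]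
        exact hzx
    _ = (2 * (2 * R / (σ * d))) ^ (-γ) * (η * u x) := by
        rw [show 2 * (2 * R / (σ * d)) = 4 / σ * (R / d) by field_simp; norm_num,
          Real.mul_rpow (by positivity) (by positivity)]
        ring
    _ ≤ c ^ n * (η * u x) := by
        have := hupos x
        rw [hcγ] at hcn
        gcongr
    _ ≤ u y := hexpand u hu hupos x _ _ hσd (mul_pos hη (hupos x))
        (hstart u hu hupos x _ hσd hx2) n y hy

theorem liouville_p_harmonic_general (hE : 1 < finrank ℝ E) (hp : 1 < p) {u : E → ℝ}
    (hu : IsPHarmonic p u) (hbdd : BddBelow (range u)) (x y : E) : u x = u y := by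
  obtain ⟨κ, hκ, hharnack⟩ := IsPHarmonic.harnack (E := E) hE hp
  suffices hinf : ∀ x, u x = ⨅ y, u y by rw [hinf x, hinf y]
  intro x
  have hle (y : E) : ⨅ y, u y ≤ u y := ciInf_le hbdd y
  refine (hle x).antisymm' (le_of_forall_pos_le_add fun ε hε ↦ ?_)
  have hδ : 0 < κ * ε / 2 := by positivity
  obtain ⟨y, hy⟩ := exists_lt_of_ciInf_lt (lt_add_of_pos_right (⨅ y, u y) hδ)
  have hxy := hharnack _ (hu.add_const (κ * ε / 2 - ⨅ y, u y)) (fun z ↦ by linarith [hle z]) x y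
  have hκε : κ * (u x + (κ * ε / 2 - ⨅ y, u y)) ≤ κ * ε := by linarith
  linarith [le_of_mul_le_mul_left hκε hκ]

end Harnack

/-- **Lemma 3.1 (first part), Liouville theorem for p-harmonic functions.**
Let `1 < p < ∞` with `N > p`. Any nonnegative `C¹` weak solution of `Δ_p u = 0`
on all of `ℝ^N` is constant. -/
theorem liouville_p_harmonic
    (N : ℕ) (p : ℝ) (hp : 1 < p) (hNp : p < N)
    (u : EuclideanSpace ℝ (Fin N) → ℝ) (hu : ContDiff ℝ 1 u)
    (hnonneg : ∀ x, 0 ≤ u x)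
    (hweak : ∀ φ : EuclideanSpace ℝ (Fin N) → ℝ,
      ContDiff ℝ (⊤ : ℕ∞) φ → HasCompactSupport φ →
      ∫ x, ‖gradient u x‖ ^ (p - 2) * ⟪gradient u x, gradient φ x⟫ = 0) :
    ∀ x y, u x = u y := by
  have hN : 1 < Module.finrank ℝ (EuclideanSpace ℝ (Fin N)) := by
    rw [finrank_euclideanSpace_fin]
    exact_mod_cast hp.trans hNp
  have huharm : IsPHarmonic p u :=
    ⟨hu, by simpa only [pFlux, real_inner_smul_left] using hweak⟩
  exact liouville_p_harmonic_general hN hp huharm ⟨0, Set.forall_mem_range.2 hnonneg⟩
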